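/- Let A be a basic indecomposable artin algebra and let X and Y be modules in ind A. Then X and Y belong to the same connected component of the cyclic quiver _cΓ_A if and only if there is an oriented cycle in the Auslander–Reiten quiver Γ_A passing through both X and Y. -/

import Mathlib

/-!
Common framework: finite length modules over a ring, the radical of the module
category, cycles of indecomposable modules, Auslander-Reiten quivers,
translation quivers notions, and classes of artin algebras.
Right `A`-modules are formalized as left `Aᵐᵒᵖ`-modules.
-/

universe u

/-- A bundled object of `mod R`: a finite length `R`-module. -/
structure ModA (R : Type u) [Ring R] : Type (u + 1) where
  M : Type u
  [acg : AddCommGroup M]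
  [mod : Module R M]
  finLen : IsFiniteLength R M

attribute [instance] ModA.acg ModA.mod

/-- A bundled (not necessarily finite length) `R`-module. -/
structure RawMod (R : Type u) [Ring R] : Type (u + 1) where
  M : Type u
  [acg : AddCommGroup M]
  [mod : Module R M]

attribute [instance] RawMod.acg RawMod.mod

/-- A module is indecomposable iff it is nonzero and its endomorphism ring has no
nontrivial idempotents. -/
def IsIndecMod (R : Type u) [Ring R] (M : Type u) [AddCommGroup M] [Module R M] : Prop :=
  Nontrivial M ∧ ∀ f : Module.End R M, f * f = f → f = 0 ∨ f = 1

namespace ModA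

variable {R : Type u} [Ring R]

/-- Indecomposability of an object of `mod R`. -/
def IsIndec (X : ModA R) : Prop := IsIndecMod R X.M

/-- Isomorphism of objects of `mod R`. -/
def Iso (X Y : ModA R) : Prop := Nonempty (X.M ≃ₗ[R] Y.M)

end ModA

/-- Membership in the radical `rad(X, Y)` of the category `mod R`: a map `f : X → Y`
belongs to the radical iff for every indecomposable `Z` and all `g : Z → X`, `h : Y → Z`
the composite `h ∘ f ∘ g` is not an isomorphism. -/
def InRad {R : Type u} [Ring R] {X Y : ModA R} (f : X.M →ₗ[R] Y.M) : Prop :=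
  ∀ Z : ModA R, Z.IsIndec → ∀ (g : Z.M →ₗ[R] X.M) (h : Y.M →ₗ[R] Z.M),
    ¬Function.Bijective (h.comp (f.comp g))

/-- The powers `rad^n` of the radical of `mod R`. -/
def radPow (R : Type u) [Ring R] : ℕ → ∀ X Y : ModA R, AddSubgroup (X.M →ₗ[R] Y.M)
  | 0, _, _ => ⊤
  | n + 1, X, Y => AddSubgroup.closure
      {f | ∃ (Z : ModA R) (g : X.M →ₗ[R] Z.M) (h : Z.M →ₗ[R] Y.M),
        InRad g ∧ h ∈ radPow R n Z Y ∧ f = h.comp g}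

/-- Membership in the infinite radical `rad^∞ = ⋂ₙ radⁿ` of `mod R`. -/
def InRadInf {R : Type u} [Ring R] {X Y : ModA R} (f : X.M →ₗ[R] Y.M) : Prop :=
  ∀ n : ℕ, f ∈ radPow R n X Y

/-- A cycle in `ind R`: a sequence of nonzero nonisomorphisms
`M₀ → M₁ → ⋯ → M_{r-1} → M_r = M₀` between indecomposable modules. -/
structure ModCycle (R : Type u) [Ring R] : Type (u + 1) where
  len : ℕ
  len_pos : 0 < len
  obj : Fin (len + 1) → ModA R
  obj_indec : ∀ i, (obj i).IsIndec
  closed : obj (Fin.last len) = obj 0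
  hom : ∀ i : Fin len, (obj i.castSucc).M →ₗ[R] (obj i.succ).M
  hom_ne_zero : ∀ i, hom i ≠ 0
  hom_not_iso : ∀ i, ¬Function.Bijective (hom i)

/-- A cycle is finite if none of its homomorphisms lies in the infinite radical. -/
def ModCycle.IsFiniteCycle {R : Type u} [Ring R] (c : ModCycle R) : Prop :=
  ∀ i, ¬InRadInf (c.hom i)

/-- The cycle passes through the module `M`. -/
def ModCycle.Passes {R : Type u} [Ring R] (c : ModCycle R) (M : ModA R) : Prop :=
  ∃ i, (c.obj i).Iso M

/-- A module is cycle-finite if it lies on a cycle and every cycle through it is finite. -/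
def IsCycleFiniteModule {R : Type u} [Ring R] (M : ModA R) : Prop :=
  (∃ c : ModCycle R, c.Passes M) ∧ ∀ c : ModCycle R, c.Passes M → c.IsFiniteCycle

/-- A module is directing if it lies on no cycle. -/
def IsDirectingModule {R : Type u} [Ring R] (M : ModA R) : Prop :=
  ¬∃ c : ModCycle R, c.Passes M

section Irreducible

variable {R : Type u} [Ring R]

/-- `f` is a split monomorphism (a section). -/
def SplitMonoMap {X Y : ModA R} (f : X.M →ₗ[R] Y.M) : Prop :=
  ∃ r : Y.M →ₗ[R] X.M, r.comp f = LinearMap.id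

/-- `f` is a split epimorphism (a retraction). -/
def SplitEpiMap {X Y : ModA R} (f : X.M →ₗ[R] Y.M) : Prop :=
  ∃ s : Y.M →ₗ[R] X.M, f.comp s = LinearMap.id

/-- `f` is an irreducible homomorphism. -/
def IsIrred {X Y : ModA R} (f : X.M →ₗ[R] Y.M) : Prop :=
  ¬SplitMonoMap f ∧ ¬SplitEpiMap f ∧
    ∀ (Z : ModA R) (g : X.M →ₗ[R] Z.M) (h : Z.M →ₗ[R] Y.M), h.comp g = f →
      SplitMonoMap g ∨ SplitEpiMap h

end Irreducible

/-- An almost split (Auslander-Reiten) sequence `0 → l → m → r → 0` in `mod R`. -/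
structure AlmostSplitSeq (R : Type u) [Ring R] : Type (u + 1) where
  l : ModA R
  m : ModA R
  r : ModA R
  f : l.M →ₗ[R] m.M
  g : m.M →ₗ[R] r.M
  inj : Function.Injective f
  surj : Function.Surjective g
  exact : LinearMap.range f = LinearMap.ker g
  not_split : ¬SplitEpiMap g
  l_indec : l.IsIndec
  r_indec : r.IsIndec
  right_almost : ∀ (Z : ModA R) (h : Z.M →ₗ[R] r.M), ¬SplitEpiMap h →
      ∃ h' : Z.M →ₗ[R] m.M, g.comp h' = h
  left_almost : ∀ (Z : ModA R) (h : l.M →ₗ[R] Z.M), ¬SplitMonoMap h →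
      ∃ h' : m.M →ₗ[R] Z.M, h'.comp f = h

/-- `N ≅ τ M` for the Auslander-Reiten translation `τ = DTr`. -/
def IsTauOf {R : Type u} [Ring R] (N M : ModA R) : Prop :=
  ∃ s : AlmostSplitSeq R, s.l.Iso N ∧ s.r.Iso M

/-- The indecomposable objects of `mod R`. -/
def IndecModA (R : Type u) [Ring R] := {X : ModA R // X.IsIndec}

/-- Isomorphism is an equivalence relation on indecomposable modules. -/
def isoSetoid (R : Type u) [Ring R] : Setoid (IndecModA R) where
  r X Y := X.1.Iso Y.1
  iseqv :=
    { refl := fun X => ⟨LinearEquiv.refl R X.1.M⟩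
      symm := fun h => h.elim fun e => ⟨e.symm⟩
      trans := fun h h' => h.elim fun e => h'.elim fun e' => ⟨e.trans e'⟩ }

/-- The vertices of the Auslander-Reiten quiver `Γ_R`: isomorphism classes of
indecomposable modules in `mod R`. -/
def ARVertex (R : Type u) [Ring R] := Quotient (isoSetoid R)

/-- The vertex of `Γ_R` given by an indecomposable module. -/
def ARVertex.mk {R : Type u} [Ring R] (X : IndecModA R) : ARVertex R :=
  Quotient.mk (isoSetoid R) X

section ARQuiver

variable {R : Type u} [Ring R]

/-- The arrows of the Auslander-Reiten quiver: `x → y` iff there is an irreducible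
homomorphism between representatives. -/
def ARArrow (x y : ARVertex R) : Prop :=
  ∃ (X Y : IndecModA R) (f : X.1.M →ₗ[R] Y.1.M),
    IsIrred f ∧ ARVertex.mk X = x ∧ ARVertex.mk Y = y

/-- `TauRel x y` iff `x = τ y` in the Auslander-Reiten quiver. -/
def TauRel (x y : ARVertex R) : Prop :=
  ∃ X Y : IndecModA R, ARVertex.mk X = x ∧ ARVertex.mk Y = y ∧ IsTauOf X.1 Y.1

/-- A vertex given by an (indecomposable) projective module. -/
def IsProjVertex (x : ARVertex R) : Prop :=
  ∃ X : IndecModA R, ARVertex.mk X = x ∧ Module.Projective R X.1.M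

/-- A vertex given by an (indecomposable) injective module. -/
def IsInjVertex (x : ARVertex R) : Prop :=
  ∃ X : IndecModA R, ARVertex.mk X = x ∧ Module.Injective R X.1.M

/-- The vertex lies on an oriented cycle of `Γ_R`. -/
def OnARCycle (x : ARVertex R) : Prop := Relation.TransGen ARArrow x x

/-- An edge (arrow in either direction) of the underlying graph of `Γ_R`. -/
def ARStep (x y : ARVertex R) : Prop := ARArrow x y ∨ ARArrow y x

/-- `D` is a connected component of the full subquiver of `Γ_R` on the vertex set `S`. -/
def IsComponentOf (S D : Set (ARVertex R)) : Prop :=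
  D ⊆ S ∧ D.Nonempty ∧
    (∀ x ∈ D, ∀ y ∈ S, ARStep x y → y ∈ D) ∧
    ∀ x ∈ D, ∀ y ∈ D, Relation.ReflTransGen (fun a b => a ∈ S ∧ b ∈ S ∧ ARStep a b) x y

/-- `C` is a connected component of `Γ_R`. -/
def IsARComponent (C : Set (ARVertex R)) : Prop := IsComponentOf Set.univ C

/-- The vertex lies on an oriented cycle all of whose vertices belong to `S`. -/
def OnCycleIn (S : Set (ARVertex R)) (x : ARVertex R) : Prop :=
  Relation.TransGen (fun a b => a ∈ S ∧ b ∈ S ∧ ARArrow a b) x x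

/-- `Γ` is a connected component of the cyclic quiver `_cΓ_R` (a cyclic component). -/
def IsCyclicComponent (Γ : Set (ARVertex R)) : Prop :=
  IsComponentOf {x | OnARCycle x} Γ

/-- A vertex represented by a cycle-finite module. -/
def IsCycleFiniteVertex (x : ARVertex R) : Prop :=
  ∃ X : IndecModA R, ARVertex.mk X = x ∧ IsCycleFiniteModule X.1

/-- A vertex represented by a directing module. -/
def IsDirectingVertex (x : ARVertex R) : Prop :=
  ∃ X : IndecModA R, ARVertex.mk X = x ∧ IsDirectingModule X.1

/-- A cycle-finite cyclic component: a cyclic component containing a cycle-finite module. -/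
def IsCycleFiniteCyclicComponent (Γ : Set (ARVertex R)) : Prop :=
  IsCyclicComponent Γ ∧ ∃ x ∈ Γ, IsCycleFiniteVertex x

/-- A full translation subquiver is cyclic if each of its vertices lies on an oriented
cycle inside it. -/
def IsCyclicSub (S : Set (ARVertex R)) : Prop := ∀ x ∈ S, OnCycleIn S x

/-- A full translation subquiver is coherent: every projective vertex is the start of an
infinite sectional path inside it, and every injective vertex is the end of an infinite
sectional path inside it. -/
def IsCoherentSub (S : Set (ARVertex R)) : Prop :=
  (∀ x ∈ S, IsProjVertex x → ∃ c : ℕ → ARVertex R, c 0 = x ∧ (∀ n, c n ∈ S) ∧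
      (∀ n, ARArrow (c n) (c (n + 1))) ∧ ∀ n, ¬TauRel (c n) (c (n + 2))) ∧
  (∀ x ∈ S, IsInjVertex x → ∃ c : ℕ → ARVertex R, c 0 = x ∧ (∀ n, c n ∈ S) ∧
      (∀ n, ARArrow (c (n + 1)) (c n)) ∧ ∀ n, ¬TauRel (c (n + 2)) (c n))

/-- `S` is a convex subquiver of (the full subquiver on) `C`: every path in `C` with
source and target in `S` has all its vertices in `S`. -/
def ConvexIn (C S : Set (ARVertex R)) : Prop :=
  ∀ (n : ℕ) (c : ℕ → ARVertex R), (∀ k ≤ n, c k ∈ C) →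
    (∀ k < n, ARArrow (c k) (c (k + 1))) → c 0 ∈ S → c n ∈ S → ∀ k ≤ n, c k ∈ S

/-- `S` is the core of the almost acyclic component `C`: the finite convex subquiver of
`C` containing all vertices lying on oriented cycles in `C`. -/
def IsCoreOf (C S : Set (ARVertex R)) : Prop :=
  S ⊆ C ∧ S.Finite ∧ ConvexIn C S ∧ ∀ x ∈ C, OnCycleIn C x → x ∈ S

/-- A component is almost acyclic if all but finitely many of its vertices do not lie on
oriented cycles. -/
def IsAlmostAcyclicComp (C : Set (ARVertex R)) : Prop := {x ∈ C | OnCycleIn C x}.Finite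

/-- A component is almost cyclic if its cyclic part is cofinite. -/
def IsAlmostCyclicComp (C : Set (ARVertex R)) : Prop := {x ∈ C | ¬OnCycleIn C x}.Finite

/-- Two vertices lie in the same `τ`-orbit. -/
def TauConn (x y : ARVertex R) : Prop :=
  Relation.ReflTransGen (fun a b => TauRel a b ∨ TauRel b a) x y

/-- The left stable part of `C`: remove the `τ`-orbits of projective vertices. -/
def leftStable (C : Set (ARVertex R)) : Set (ARVertex R) :=
  {x | x ∈ C ∧ ¬∃ y, TauConn x y ∧ IsProjVertex y}

/-- The right stable part of `C`: remove the `τ`-orbits of injective vertices. -/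
def rightStable (C : Set (ARVertex R)) : Set (ARVertex R) :=
  {x | x ∈ C ∧ ¬∃ y, TauConn x y ∧ IsInjVertex y}

/-- The stable part of `C`. -/
def stablePart (C : Set (ARVertex R)) : Set (ARVertex R) := leftStable C ∩ rightStable C

end ARQuiver

/-- The arrows of the translation quiver `ℤA∞/(τ^r)`, with vertices indexed by the
`τ`-orbit coordinate in `ZMod r` and the quasi-length (minus one) in `ℕ`. -/
def TubeArrow {r : ℕ} : ZMod r × ℕ → ZMod r × ℕ → Prop := fun u v =>
  (v.1 = u.1 ∧ v.2 = u.2 + 1) ∨ (v.1 = u.1 + 1 ∧ u.2 = v.2 + 1)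

section Tube

variable {R : Type u} [Ring R]

/-- `T` is a stable tube of rank `r`, parametrized by `φ : ℤA∞/(τ^r) → Γ_R`. -/
def IsStableTubeVia (T : Set (ARVertex R)) (r : ℕ) (φ : ZMod r × ℕ → ARVertex R) : Prop :=
  0 < r ∧ Function.Injective φ ∧ Set.range φ = T ∧
    (∀ u v, TubeArrow u v → ARArrow (φ u) (φ v)) ∧
    (∀ u v, ARArrow (φ u) (φ v) → TubeArrow u v) ∧
    ∀ (i : ZMod r) (n : ℕ), TauRel (φ (i - 1, n)) (φ (i, n))

/-- `T` is a stable tube. -/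
def IsStableTube (T : Set (ARVertex R)) : Prop := ∃ r φ, IsStableTubeVia T r φ

end Tube

section Separating

variable {R : Type u} [Ring R]

/-- A family of vertices is generalized standard if `rad^∞` vanishes between its modules. -/
def GeneralizedStandardSet (U : Set (ARVertex R)) : Prop :=
  ∀ X Y : IndecModA R, ARVertex.mk X ∈ U → ARVertex.mk Y ∈ U →
    ∀ f : X.1.M →ₗ[R] Y.1.M, InRadInf f → f = 0

/-- `S` is (isomorphic to) a composition factor (a subquotient) of `M`. -/
def IsCompFactorMod (R : Type u) [Ring R] (S : Type u) [AddCommGroup S] [Module R S]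
    (M : Type u) [AddCommGroup M] [Module R M] : Prop :=
  ∃ N' N : Submodule R M, N' ≤ N ∧
    Nonempty ((↥N ⧸ N'.comap N.subtype) ≃ₗ[R] S)

/-- A family of vertices is sincere if every simple module is a composition factor of one
of its modules. -/
def SincereSet (U : Set (ARVertex R)) : Prop :=
  ∀ (S : Type u) [AddCommGroup S] [Module R S], IsSimpleModule R S →
    ∃ x ∈ U, ∃ X : IndecModA R, ARVertex.mk X = x ∧ IsCompFactorMod R S X.1.M

/-- All homomorphisms from modules with vertex in `U` to modules with vertex in `V` vanish. -/
def HomVanish (U V : Set (ARVertex R)) : Prop :=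
  ∀ X Y : IndecModA R, ARVertex.mk X ∈ U → ARVertex.mk Y ∈ V →
    ∀ f : X.1.M →ₗ[R] Y.1.M, f = 0

/-- Every homomorphism from a module in `U` to a module in `V` factors through the
additive closure of the modules in `W`. -/
def FactorsThrough (U W V : Set (ARVertex R)) : Prop :=
  ∀ X Y : IndecModA R, ARVertex.mk X ∈ U → ARVertex.mk Y ∈ V →
    ∀ f : X.1.M →ₗ[R] Y.1.M, ∃ (k : ℕ) (Z : Fin k → IndecModA R)
      (g : ∀ i, X.1.M →ₗ[R] (Z i).1.M) (h : ∀ i, (Z i).1.M →ₗ[R] Y.1.M),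
      (∀ i, ARVertex.mk (Z i) ∈ W) ∧ f = ∑ i, (h i).comp (g i)

/-- `cs` is a separating family of components of `Γ_R`. -/
def IsSeparatingFamily (cs : Set (Set (ARVertex R))) : Prop :=
  ∃ ps qs : Set (Set (ARVertex R)),
    (∀ C ∈ ps, IsARComponent C) ∧ (∀ C ∈ cs, IsARComponent C) ∧ (∀ C ∈ qs, IsARComponent C) ∧
    (∀ C, IsARComponent C → C ∈ ps ∨ C ∈ cs ∨ C ∈ qs) ∧
    (∀ C ∈ ps, C ∉ cs ∧ C ∉ qs) ∧ (∀ C ∈ cs, C ∉ qs) ∧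
    SincereSet (⋃₀ cs) ∧ GeneralizedStandardSet (⋃₀ cs) ∧
    HomVanish (⋃₀ qs) (⋃₀ ps) ∧ HomVanish (⋃₀ qs) (⋃₀ cs) ∧ HomVanish (⋃₀ cs) (⋃₀ ps) ∧
    FactorsThrough (⋃₀ ps) (⋃₀ cs) (⋃₀ qs)

end Separating

/-! ### Classes of algebras via their Auslander-Reiten quivers.
For a ring `B`, the category `mod B` of finitely generated right `B`-modules is
realized as the category of finite length left `Bᵐᵒᵖ`-modules. -/

/-- An algebra is of finite representation type if it has only finitely many isomorphism
classes of indecomposable finitely generated (right) modules. -/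
def IsFiniteRepTypeAlg (B : Type u) [Ring B] : Prop :=
  (Set.univ : Set (ARVertex Bᵐᵒᵖ)).Finite

/-- An algebra is cycle-finite if all cycles in `ind B` are finite. -/
def IsCycleFiniteAlg (B : Type u) [Ring B] : Prop :=
  ∀ c : ModCycle Bᵐᵒᵖ, c.IsFiniteCycle

/-- A generalized multicoil algebra: an algebra whose Auslander-Reiten quiver admits a
separating family of almost cyclic coherent components. -/
def IsGeneralizedMulticoilAlgebra (B : Type u) [Ring B] : Prop :=
  ∃ cs : Set (Set (ARVertex Bᵐᵒᵖ)),
    (∀ C ∈ cs, IsARComponent C ∧ IsAlmostCyclicComp C ∧ IsCoherentSub C) ∧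
    IsSeparatingFamily cs

/-- A generalized double tilted algebra: an algebra whose Auslander-Reiten quiver admits
a separating almost acyclic component (a connecting component). -/
def IsGeneralizedDoubleTiltedAlgebra (B : Type u) [Ring B] : Prop :=
  ∃ C : Set (ARVertex Bᵐᵒᵖ),
    IsARComponent C ∧ IsAlmostAcyclicComp C ∧ IsSeparatingFamily {C}

/-- A concealed canonical algebra: an algebra whose Auslander-Reiten quiver admits a
separating family of stable tubes. -/
def IsConcealedCanonicalAlgebra (B : Type u) [Ring B] : Prop :=
  ∃ ts : Set (Set (ARVertex Bᵐᵒᵖ)), (∀ T ∈ ts, IsStableTube T) ∧ IsSeparatingFamily ts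

/-- A generic module: an indecomposable module of infinite length with finite endolength. -/
def IsGenericModule (R : Type u) [Ring R] (N : RawMod R) : Prop :=
  IsIndecMod R N.M ∧ ¬IsFiniteLength R N.M ∧ IsFiniteLength (Module.End R N.M) N.M

/-- The endolength of a module: its length over its endomorphism ring. -/
noncomputable def endolength (R : Type u) [Ring R] (N : RawMod R) : WithBot ℕ∞ :=
  Order.krullDim (Submodule (Module.End R N.M) N.M)

/-- Generic tameness in the sense of Crawley-Boevey: for each `d` there are only finitely
many isomorphism classes of generic (right) modules of endolength `d`. -/
def IsGenericallyTameAlg (B : Type u) [Ring B] : Prop :=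
  ∀ d : ℕ, ∃ (k : ℕ) (T : Fin k → RawMod Bᵐᵒᵖ),
    ∀ N : RawMod Bᵐᵒᵖ, IsGenericModule Bᵐᵒᵖ N → endolength Bᵐᵒᵖ N = (d : ℕ∞) →
      ∃ i, Nonempty (N.M ≃ₗ[Bᵐᵒᵖ] (T i).M)

/-- A tame generalized multicoil algebra. -/
def IsTameGeneralizedMulticoilAlgebra (B : Type u) [Ring B] : Prop :=
  IsGeneralizedMulticoilAlgebra B ∧ IsGenericallyTameAlg B

/-- A tame generalized double tilted algebra. -/
def IsTameGeneralizedDoubleTiltedAlgebra (B : Type u) [Ring B] : Prop :=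
  IsGeneralizedDoubleTiltedAlgebra B ∧ IsGenericallyTameAlg B

/-! ### The quiver of an algebra, convex idempotents, basic and connected algebras -/

section AlgebraSide

variable (A : Type u) [Ring A]

/-- The Jacobson radical of `A` (as a left ideal; it is in fact two-sided). -/
def jacobsonRad : Ideal A := (⊥ : Ideal A).jacobson

/-- The square of the Jacobson radical of `A`. -/
def jacobsonRadSq : Ideal A :=
  Ideal.span {x | ∃ a ∈ jacobsonRad A, ∃ b ∈ jacobsonRad A, x = a * b}

/-- A primitive idempotent of `A`. -/
def IsPrimitiveIdempotent (e : A) : Prop :=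
  IsIdempotentElem e ∧ e ≠ 0 ∧
    ∀ f g : A, IsIdempotentElem f → IsIdempotentElem g → f * g = 0 → g * f = 0 →
      e = f + g → f = 0 ∨ g = 0

/-- A complete family of pairwise orthogonal primitive idempotents of `A`; its indices
are the vertices of the quiver `Q_A` of `A`. -/
structure CompleteIdemFamily (A : Type u) [Ring A] where
  n : ℕ
  e : Fin n → A
  prim : ∀ i, IsPrimitiveIdempotent A (e i)
  orth : ∀ i j, i ≠ j → e i * e j = 0
  total : ∑ i, e i = 1

/-- There is an arrow `i → j` in the quiver `Q_A` iff `e_i (rad A) e_j ⊄ (rad A)²`. -/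
def QAarrow (E : CompleteIdemFamily A) (i j : Fin E.n) : Prop :=
  ∃ y ∈ jacobsonRad A, E.e i * y * E.e j ∉ jacobsonRadSq A

/-- A set of vertices of `Q_A` is convex if every path of `Q_A` with source and target in
it has all its vertices in it. -/
def ConvexVertexSet (E : CompleteIdemFamily A) (S : Set (Fin E.n)) : Prop :=
  ∀ (n : ℕ) (c : ℕ → Fin E.n), (∀ k < n, QAarrow A E (c k) (c (k + 1))) →
    c 0 ∈ S → c n ∈ S → ∀ k ≤ n, c k ∈ S

/-- A convex idempotent of `A`: a sum of pairwise orthogonal primitive idempotents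
corresponding to the vertices of a convex subquiver of `Q_A`. -/
def IsConvexIdempotent (e : A) : Prop :=
  ∃ (E : CompleteIdemFamily A) (S : Finset (Fin E.n)),
    ConvexVertexSet A E ↑S ∧ e = ∑ i ∈ S, E.e i

/-- The corner `eAe` of `A` at an idempotent `e`, as a nonunital subring (it is a unital
ring with unit `e`). -/
def cornerRing (e : A) : NonUnitalSubring A where
  carrier := {x | e * x = x ∧ x * e = x}
  zero_mem' := by simp
  add_mem' := by
    rintro a b ⟨ha1, ha2⟩ ⟨hb1, hb2⟩
    constructor
    · rw [mul_add, ha1, hb1]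
    · rw [add_mul, ha2, hb2]
  neg_mem' := by
    rintro a ⟨ha1, ha2⟩
    constructor
    · rw [mul_neg, ha1]
    · rw [neg_mul, ha2]
  mul_mem' := by
    rintro a b ⟨ha1, ha2⟩ ⟨hb1, hb2⟩
    constructor
    · rw [← mul_assoc, ha1]
    · rw [mul_assoc, hb2]

/-- An (indecomposable =) connected algebra: no nontrivial central idempotents. -/
def IsConnectedAlgebra : Prop :=
  Nontrivial A ∧ ∀ e : A, IsIdempotentElem e → e ∈ Set.center A → e = 0 ∨ e = 1

/-- A basic algebra: distinct orthogonal primitive idempotents have nonisomorphic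
associated indecomposable projective right modules. -/
def IsBasicAlgebra : Prop :=
  ¬∃ e f : A, IsPrimitiveIdempotent A e ∧ IsPrimitiveIdempotent A f ∧
    e * f = 0 ∧ f * e = 0 ∧
    Nonempty ((Submodule.span Aᵐᵒᵖ {e} : Submodule Aᵐᵒᵖ A) ≃ₗ[Aᵐᵒᵖ]
      (Submodule.span Aᵐᵒᵖ {f} : Submodule Aᵐᵒᵖ A))

end AlgebraSide

/-! ### Support algebras and faithful algebras of families of vertices -/

section Support

variable (A : Type u) [Ring A]

/-- The radical of a module: the intersection of its maximal submodules. -/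
def modRadical (R : Type u) [Ring R] (M : Type u) [AddCommGroup M] [Module R M] :
    Submodule R M :=
  sInf {N | IsCoatom N}

/-- The intersection `ann_A(Γ)` of the annihilators of all right `A`-modules whose
vertices belong to `Γ`, as a two-sided ideal of `A`. -/
def annTwoSidedIdeal (Γ : Set (ARVertex Aᵐᵒᵖ)) : TwoSidedIdeal A :=
  TwoSidedIdeal.mk'
    {a | ∀ x ∈ Γ, ∀ X : IndecModA Aᵐᵒᵖ, ARVertex.mk X = x →
      ∀ m : X.1.M, MulOpposite.op a • m = 0}
    (by intro x _ X _ m; simp)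
    (by
      intro a b ha hb x hx X hX m
      have : MulOpposite.op (a + b) • m = MulOpposite.op a • m + MulOpposite.op b • m := by
        rw [← add_smul]; rfl
      rw [this, ha x hx X hX m, hb x hx X hX m, add_zero])
    (by
      intro a ha x hx X hX m
      have : MulOpposite.op (-a) • m = -(MulOpposite.op a • m) := by
        rw [← neg_smul]; rfl
      rw [this, ha x hx X hX m, neg_zero])
    (by
      intro a b hb x hx X hX m
      have : MulOpposite.op (a * b) • m = MulOpposite.op b • (MulOpposite.op a • m) := by
        rw [← mul_smul]; rfl
      rw [this, hb x hx X hX _])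
    (by
      intro a b ha x hx X hX m
      have : MulOpposite.op (a * b) • m = MulOpposite.op b • (MulOpposite.op a • m) := by
        rw [← mul_smul]; rfl
      rw [this, ha x hx X hX m, smul_zero])

/-- The faithful algebra `B(Γ) = A / ann_A(Γ)` of a family `Γ` of vertices of `Γ_A`. -/
abbrev faithfulAlg (Γ : Set (ARVertex Aᵐᵒᵖ)) : Type u :=
  (annTwoSidedIdeal A Γ).ringCon.Quotient

/-- The canonical projection `A → B(Γ)`. -/
def faithfulProj (Γ : Set (ARVertex Aᵐᵒᵖ)) : A →+* faithfulAlg A Γ :=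
  RingCon.mk' (annTwoSidedIdeal A Γ).ringCon

/-- The trace ideal `t_A(Γ)`: the two-sided ideal of `A` generated by the images of all
homomorphisms of right `A`-modules from `Q` to `A`. -/
def traceIdeal (Q : Submodule Aᵐᵒᵖ A) : TwoSidedIdeal A :=
  TwoSidedIdeal.span (⋃ f : ↥Q →ₗ[Aᵐᵒᵖ] A, Set.range f)

/-- A decomposition `A = P_Γ ⊕ Q_Γ` of `A` in `mod A` such that the simple summands of
`P_Γ / rad P_Γ` are exactly the simple composition factors of the modules in `Γ`. -/
structure GammaDecomp (A : Type u) [Ring A] (Γ : Set (ARVertex Aᵐᵒᵖ)) where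
  P : Submodule Aᵐᵒᵖ A
  Q : Submodule Aᵐᵒᵖ A
  compl : IsCompl P Q
  top_factors : ∀ (S : Type u) [AddCommGroup S] [Module Aᵐᵒᵖ S], IsSimpleModule Aᵐᵒᵖ S →
    (IsCompFactorMod Aᵐᵒᵖ S (↥P ⧸ modRadical Aᵐᵒᵖ ↥P) ↔
      ∃ x ∈ Γ, ∃ X : IndecModA Aᵐᵒᵖ, ARVertex.mk X = x ∧ IsCompFactorMod Aᵐᵒᵖ S X.1.M)

end Support

/-- Restriction of scalars along a surjective ring homomorphism `π : A → B` identifies a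
vertex `y` of `Γ_B` with a vertex `x` of `Γ_A`: representatives have the same underlying
group, with the `A`-action obtained from the `B`-action through `π`. -/
def VertexRestrictsTo {A B : Type u} [Ring A] [Ring B] (π : A →+* B)
    (y : ARVertex Bᵐᵒᵖ) (x : ARVertex Aᵐᵒᵖ) : Prop :=
  ∃ (N : IndecModA Bᵐᵒᵖ) (X : IndecModA Aᵐᵒᵖ), ARVertex.mk N = y ∧ ARVertex.mk X = x ∧
    ∃ e : X.1.M ≃+ N.1.M, ∀ (a : A) (m : X.1.M),
      e (MulOpposite.op a • m) = MulOpposite.op (π a) • e m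

/-! ### `K`-module structures on Hom-groups, lengths, and Ext -/

section KLength

variable (K B : Type u) [CommRing K] [Ring B] [Algebra K B]
variable (X N : Type u) [AddCommGroup X] [Module B X] [AddCommGroup N] [Module B N]

/-- The action of `K` on `B`-linear maps, through `algebraMap K B`. -/
def homKSMul (k : K) (f : X →ₗ[B] N) : X →ₗ[B] N where
  toFun x := algebraMap K B k • f x
  map_add' x y := by show algebraMap K B k • f (x + y) = _; rw [map_add, smul_add]
  map_smul' b x := by
    simp only [map_smul, RingHom.id_apply, smul_smul]
    rw [Algebra.commutes]

/-- The `K`-module structure on the group of `B`-linear maps. -/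
def homKModule : Module K (X →ₗ[B] N) where
  smul := homKSMul K B X N
  one_smul f := LinearMap.ext fun x => by
    show algebraMap K B 1 • f x = f x
    rw [map_one, one_smul]
  mul_smul k l f := LinearMap.ext fun x => by
    show algebraMap K B (k * l) • f x = algebraMap K B k • algebraMap K B l • f x
    rw [map_mul, mul_smul]
  smul_zero k := LinearMap.ext fun x => by
    show algebraMap K B k • (0 : X →ₗ[B] N) x = 0
    simp
  smul_add k f g := LinearMap.ext fun x => by
    show algebraMap K B k • (f + g) x = algebraMap K B k • f x + algebraMap K B k • g x
    simp [smul_add]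
  add_smul k l f := LinearMap.ext fun x => by
    show algebraMap K B (k + l) • f x = algebraMap K B k • f x + algebraMap K B l • f x
    rw [map_add, add_smul]
  zero_smul f := LinearMap.ext fun x => by
    show algebraMap K B 0 • f x = 0
    rw [map_zero, zero_smul]

/-- The length `|Hom_B(X, N)|` of the group of `B`-linear maps `X → N` as a `K`-module. -/
noncomputable def homKLength : WithBot ℕ∞ :=
  letI : Module K (X →ₗ[B] N) := homKModule K B X N
  Order.krullDim (Submodule K (X →ₗ[B] N))

/-- The canonical surjection from the free module on (the underlying set of) `X` to `X`. -/
noncomputable def freeCover : (X →₀ B) →ₗ[B] X :=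
  Finsupp.linearCombination B id

/-- The length `|Ext¹_B(X, N)|` of `Ext¹` as a `K`-module, computed as the cokernel of
`Hom_B(F, N) → Hom_B(Ω X, N)` for the canonical free cover `F → X` with kernel `Ω X`. -/
noncomputable def ext1KLength : WithBot ℕ∞ :=
  letI : Module K (↥(LinearMap.ker (freeCover B X)) →ₗ[B] N) :=
    homKModule K B (↥(LinearMap.ker (freeCover B X))) N
  let D : Submodule K (↥(LinearMap.ker (freeCover B X)) →ₗ[B] N) :=
    { carrier := {f | ∃ g : (X →₀ B) →ₗ[B] N,
        f = g.comp (LinearMap.ker (freeCover B X)).subtype}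
      add_mem' := by
        rintro f₁ f₂ ⟨g₁, rfl⟩ ⟨g₂, rfl⟩
        exact ⟨g₁ + g₂, rfl⟩
      zero_mem' := ⟨0, rfl⟩
      smul_mem' := by
        rintro k f ⟨g, rfl⟩
        exact ⟨homKSMul K B _ N k g, rfl⟩ }
  Order.krullDim (Submodule K ((↥(LinearMap.ker (freeCover B X)) →ₗ[B] N) ⧸ D))

end KLength

/-- Vanishing of `Ext¹_B(X, N)`: every short exact sequence `0 → N → E → X → 0` splits. -/
def Ext1IsZero (B : Type u) [Ring B] (X : Type u) [AddCommGroup X] [Module B X]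
    (N : Type u) [AddCommGroup N] [Module B N] : Prop :=
  ∀ (E : Type u) [AddCommGroup E] [Module B E], ∀ (f : N →ₗ[B] E) (g : E →ₗ[B] X),
    Function.Injective f → Function.Surjective g → LinearMap.range f = LinearMap.ker g →
    ∃ s : X →ₗ[B] E, g.comp s = LinearMap.id

/-- The syzygy `Ω X`: the kernel of the canonical free cover of `X`. -/
noncomputable def syzygyRaw (B : Type u) [Ring B] (X : RawMod B) : RawMod B :=
  ⟨↥(LinearMap.ker (freeCover B X.M))⟩

/-- Iterated syzygies. -/
noncomputable def syzygyIter (B : Type u) [Ring B] : ℕ → RawMod B → RawMod B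
  | 0, X => X
  | n + 1, X => syzygyRaw B (syzygyIter B n X)

/-- Vanishing of `Ext^r_B(X, N)` for `r ≥ 1`, via `Ext^r(X, N) ≅ Ext¹(Ω^{r-1} X, N)`. -/
noncomputable def ExtIsZero (B : Type u) [Ring B] (X N : RawMod B) (r : ℕ) : Prop :=
  Ext1IsZero B (syzygyIter B (r - 1) X).M N.M

/-- `[X] = [M]` in the Grothendieck group `K₀`: the modules `X` and `M` have the same
composition factors including multiplicities. -/
def SameCompFactors {B : Type u} [Ring B] (X M : ModA B) : Prop :=
  ∃ (n : ℕ) (s : Fin (n + 1) → Submodule B X.M) (t : Fin (n + 1) → Submodule B M.M)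
    (σ : Equiv.Perm (Fin n)),
    s 0 = ⊥ ∧ s (Fin.last n) = ⊤ ∧ t 0 = ⊥ ∧ t (Fin.last n) = ⊤ ∧
    (∀ i : Fin n, s i.castSucc ≤ s i.succ) ∧ (∀ i : Fin n, t i.castSucc ≤ t i.succ) ∧
    ∀ i : Fin n,
      IsSimpleModule B (↥(s i.succ) ⧸ (s i.castSucc).comap (s i.succ).subtype) ∧
      Nonempty ((↥(s i.succ) ⧸ (s i.castSucc).comap (s i.succ).subtype) ≃ₗ[B]
        (↥(t (σ i).succ) ⧸ (t (σ i).castSucc).comap (t (σ i).succ).subtype))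

/-- A torsion class in `mod B`: a class of modules closed under factor modules and
extensions. -/
def IsTorsionClass (B : Type u) [Ring B] (T : Set (ModA B)) : Prop :=
  (∀ M ∈ T, ∀ (N : ModA B) (g : M.M →ₗ[B] N.M), Function.Surjective g → N ∈ T) ∧
  ∀ (X E M : ModA B) (f : X.M →ₗ[B] E.M) (g : E.M →ₗ[B] M.M),
    Function.Injective f → Function.Surjective g → LinearMap.range f = LinearMap.ker g →
    X ∈ T → M ∈ T → E ∈ T

/-- A torsion class is functorially finite iff it is of the form `Fac(M)`. -/
def IsFunctoriallyFinite (B : Type u) [Ring B] (T : Set (ModA B)) : Prop :=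
  ∃ M : ModA B,
    T = {N | ∃ (k : ℕ) (g : (Fin k → M.M) →ₗ[B] N.M), Function.Surjective g}

/-- A module `M` is `τ`-rigid if `Hom(M, τM) = 0`. -/
def IsTauRigid {B : Type u} [Ring B] (M : ModA B) : Prop :=
  ∀ N : ModA B, IsTauOf N M → ∀ f : M.M →ₗ[B] N.M, f = 0

/-- A module `M` is rigid if `Ext¹(M, M) = 0`. -/
def IsRigid {B : Type u} [Ring B] (M : ModA B) : Prop := Ext1IsZero B M.M M.M

/-- `α(M) ≤ 2`: the middle term of any almost split sequence ending at `M` has at most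
two indecomposable direct summands. -/
def AlphaLe2 {B : Type u} [Ring B] (M : ModA B) : Prop :=
  ∀ s : AlmostSplitSeq B, s.r.Iso M →
    ∀ (k : ℕ) (N : Fin k → Submodule B s.m.M),
      (∀ i, IsIndecMod B ↥(N i)) → iSupIndep N → (⨆ i, N i) = ⊤ → k ≤ 2

/-!
Everything reduces to reversing an arrow `X → Y` between cyclic vertices by an oriented path
`Y ⇝ X`. The arrow is given by an irreducible map `g : X → Y`, which is injective or surjective.

Suppose that `g` is surjective. The composite of irreducible maps around an oriented cycle through
`Y` is a non-automorphism of an indecomposable module, so some power of it vanishes by Fitting's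
lemma: there is a path of irreducible maps from `Y` to `Y` with composite zero.

Following Igusa and Todorov, consider a path `Z = Z₀ → ⋯ → Zₙ = Y` with composite in `radⁿ⁺¹` such
that `Z₁, …, Zₙ` are not projective; then `Z ⇝ X` for every arrow `X → Y`. Since `τ Y → X` is an
arrow, it suffices to find a path `Z ⇝ τ Y`. If the composite `F : Z → Zₙ₋₁` lies in `radⁿ`, such a
path is given by induction, applied to the arrow `τ Y → Zₙ₋₁`. Otherwise, `F` composed with the
section `Zₙ₋₁ → M` into the middle term of the almost split sequence ending at `Y` differs from a
map in `radⁿ` by a map that factors through `τ Y`, and the factor `Z → τ Y` is not in `radⁿ`. Such a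
map is, modulo `radⁿ`, a sum of composites of irreducible maps, which gives the path.

If the path does contain a projective module, let `Z` be the last one. The composite of the tail
from `Z` to `Y` either lies in the next radical power, so that the argument above applies, or it
lifts along the surjection `g` to a map `Z → X` outside that radical power.

The case of an injective `g` is dual, by the Matlis-type duality `Hom_K(-, E)` for the injective
hull `E` of a direct sum of simple `K`-modules, one from each isomorphism class. Almost split
sequences are obtained from a functional `ξ : End Y → E` that kills the non-automorphisms but not
the identity: the functors `Hom_K(Hom_R(P, -), E)` with `P` finitely generated free are
representable, and through a presentation of `Y` by such `P` this yields a map `e` into `Y` such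
that `h` factors through `e` if and only if `ξ (h ∘ u) = 0` for all `u`. This `e` is right almost
split.
-/

section LinearMap

variable {R M N P : Type*} [Ring R] [AddCommGroup M] [Module R M] [AddCommGroup N] [Module R N]
  [AddCommGroup P] [Module R P]

theorem exists_comp_eq_of_range_le {f : M →ₗ[R] N} (hf : Function.Injective f) {g : P →ₗ[R] N}
    (h : g.range ≤ f.range) : ∃ k : P →ₗ[R] M, f.comp k = g := by
  refine ⟨(LinearEquiv.ofInjective f hf).symm.toLinearMap.comp
    (g.codRestrict f.range fun x => h ⟨x, rfl⟩), LinearMap.ext fun x => ?_⟩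
  exact congrArg Subtype.val ((LinearEquiv.ofInjective f hf).apply_symm_apply _)

theorem exists_comp_eq_of_ker_le {f : M →ₗ[R] N} (hf : Function.Surjective f) {g : M →ₗ[R] P}
    (h : f.ker ≤ g.ker) : ∃ k : N →ₗ[R] P, k.comp f = g := by
  refine ⟨(f.ker.liftQ g h).comp (f.quotKerEquivOfSurjective hf).symm.toLinearMap,
    LinearMap.ext fun x => ?_⟩
  have hx : (f.quotKerEquivOfSurjective hf).symm (f x) = f.ker.mkQ x :=
    (LinearEquiv.symm_apply_eq _).2 rfl
  simp [hx]

/-- The pushout of `f : M → N` and `g : M → P` is the quotient of `N × P` by `pushoutRel f g`. -/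
def pushoutRel (f : M →ₗ[R] N) (g : M →ₗ[R] P) : Submodule R (N × P) :=
  (f.prod (-g)).range

variable {f : M →ₗ[R] N} {g : M →ₗ[R] P}

theorem mkQ_inr_comp_eq_mkQ_inl_comp :
    ((pushoutRel f g).mkQ.comp (.inr R N P)).comp g =
      ((pushoutRel f g).mkQ.comp (.inl R N P)).comp f :=
  LinearMap.ext fun m => ((Submodule.Quotient.eq (pushoutRel f g)).2 ⟨m, by simp⟩).symm

theorem injective_mkQ_comp_inr (hf : Function.Injective f) :
    Function.Injective ((pushoutRel f g).mkQ.comp (.inr R N P)) := by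
  rw [injective_iff_map_eq_zero]
  intro x hx
  obtain ⟨m, hm⟩ := (Submodule.Quotient.mk_eq_zero _).1 hx
  obtain rfl : m = 0 := hf ((congrArg Prod.fst hm).trans (map_zero f).symm)
  simpa using (congrArg Prod.snd hm).symm

end LinearMap

namespace IsIndecMod

variable {R : Type u} [Ring R] {M : Type u} [AddCommGroup M] [Module R M]

theorem isUnit_or_isNilpotent [IsNoetherian R M] [IsArtinian R M] (hM : IsIndecMod R M)
    (f : Module.End R M) : IsUnit f ∨ IsNilpotent f := by
  obtain ⟨n, hn, hn0⟩ :=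
    (f.eventually_isCompl_ker_pow_range_pow.and (Filter.eventually_ne_atTop 0)).exists
  rcases hM.2 _ (Submodule.isIdempotentElem_projection hn) with h | h
  · have hker : (f ^ n).ker = ⊥ := by
      rw [← Submodule.range_projection hn, h, LinearMap.range_zero]
    refine .inl ((isUnit_pow_iff hn0).1 ((Module.End.isUnit_iff _).2 ?_))
    exact IsArtinian.bijective_of_injective_endomorphism _ (LinearMap.ker_eq_bot.1 hker)
  · refine .inr ⟨n, LinearMap.range_eq_bot.1 ?_⟩
    rw [← Submodule.ker_projection hn, h]
    exact LinearMap.ker_id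

theorem isLocalRing_end [IsNoetherian R M] [IsArtinian R M] (hM : IsIndecMod R M) :
    IsLocalRing (Module.End R M) :=
  have := hM.1
  .of_isUnit_or_isUnit_one_sub_self fun f =>
    (hM.isUnit_or_isNilpotent f).imp_right IsNilpotent.isUnit_one_sub

theorem bijective_or_bijective_of_add [IsNoetherian R M] [IsArtinian R M] (hM : IsIndecMod R M)
    {f g : Module.End R M} (h : Function.Bijective (f + g)) :
    Function.Bijective f ∨ Function.Bijective g := by
  have := hM.isLocalRing_end
  simp only [← Module.End.isUnit_iff] at h ⊢
  exact IsLocalRing.isUnit_or_isUnit_of_isUnit_add h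

end IsIndecMod

variable {R : Type u} [Ring R] {W X Y Z : ModA R}

namespace ModA

instance (X : ModA R) : IsNoetherian R X.M :=
  (isFiniteLength_iff_isNoetherian_isArtinian.1 X.finLen).1

instance (X : ModA R) : IsArtinian R X.M :=
  (isFiniteLength_iff_isNoetherian_isArtinian.1 X.finLen).2

/-- Bundles a Noetherian and Artinian module as an object of `mod R`. -/
abbrev of (R M : Type u) [Ring R] [AddCommGroup M] [Module R M] [IsNoetherian R M]
    [IsArtinian R M] : ModA R :=
  ⟨M, isFiniteLength_iff_isNoetherian_isArtinian.2 ⟨inferInstance, inferInstance⟩⟩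

end ModA

section Split

theorem splitMonoMap_of_bijective {f : X.M →ₗ[R] Y.M} (hf : Function.Bijective f) :
    SplitMonoMap f :=
  ⟨(LinearEquiv.ofBijective f hf).symm,
    LinearMap.ext (LinearEquiv.ofBijective f hf).symm_apply_apply⟩

theorem splitEpiMap_of_bijective {f : X.M →ₗ[R] Y.M} (hf : Function.Bijective f) :
    SplitEpiMap f :=
  ⟨(LinearEquiv.ofBijective f hf).symm,
    LinearMap.ext (LinearEquiv.ofBijective f hf).apply_symm_apply⟩

namespace SplitMonoMap

theorem of_comp {f : X.M →ₗ[R] Y.M} {g : Y.M →ₗ[R] Z.M} (h : SplitMonoMap (g.comp f)) :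
    SplitMonoMap f :=
  let ⟨r, hr⟩ := h
  ⟨r.comp g, hr⟩

theorem injective {f : X.M →ₗ[R] Y.M} (h : SplitMonoMap f) : Function.Injective f :=
  let ⟨_, hr⟩ := h
  Function.LeftInverse.injective (LinearMap.congr_fun hr)

theorem bijective [Nontrivial X.M] (hY : Y.IsIndec) {f : X.M →ₗ[R] Y.M} (h : SplitMonoMap f) :
    Function.Bijective f := by
  obtain ⟨r, hr⟩ := id h
  have hidem : (f.comp r : Module.End R Y.M) * f.comp r = f.comp r := by
    change (f.comp (r.comp f)).comp r = _
    rw [hr, LinearMap.comp_id]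
  refine ⟨h.injective, fun y => ?_⟩
  rcases hY.2 _ hidem with h0 | h1
  · obtain ⟨x, hx⟩ := exists_ne (0 : X.M)
    have hrx : f (r (f x)) = f x := congrArg f (LinearMap.congr_fun hr x)
    have hfx : f x = f 0 := by rw [← hrx, map_zero]; exact LinearMap.congr_fun h0 (f x)
    exact absurd (h.injective hfx) hx
  · exact ⟨r y, LinearMap.congr_fun h1 y⟩

end SplitMonoMap

namespace SplitEpiMap

theorem of_comp {f : X.M →ₗ[R] Y.M} {g : Y.M →ₗ[R] Z.M} (h : SplitEpiMap (g.comp f)) :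
    SplitEpiMap g :=
  let ⟨s, hs⟩ := h
  ⟨f.comp s, hs⟩

theorem surjective {f : X.M →ₗ[R] Y.M} (h : SplitEpiMap f) : Function.Surjective f :=
  let ⟨_, hs⟩ := h
  Function.RightInverse.surjective (LinearMap.congr_fun hs)

theorem bijective [Nontrivial Y.M] (hX : X.IsIndec) {f : X.M →ₗ[R] Y.M} (h : SplitEpiMap f) :
    Function.Bijective f := by
  obtain ⟨s, hs⟩ := h
  have hbij : Function.Bijective s := SplitMonoMap.bijective hX ⟨f, hs⟩
  exact (Function.Bijective.of_comp_iff f hbij).1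
    (by simpa [← LinearMap.coe_comp, hs] using Function.bijective_id)

end SplitEpiMap

theorem splitMonoMap_of_bijective_comp {f : X.M →ₗ[R] Y.M} {g : Y.M →ₗ[R] Z.M}
    (h : Function.Bijective (g.comp f)) : SplitMonoMap f :=
  (splitMonoMap_of_bijective h).of_comp

theorem splitEpiMap_of_bijective_comp {f : X.M →ₗ[R] Y.M} {g : Y.M →ₗ[R] Z.M}
    (h : Function.Bijective (g.comp f)) : SplitEpiMap g :=
  (splitEpiMap_of_bijective h).of_comp

theorem SplitMonoMap.splitEpiMap {f : X.M →ₗ[R] Y.M} {g : Y.M →ₗ[R] Z.M} (hf : SplitMonoMap f)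
    (hg : Function.Surjective g) (hex : f.range = g.ker) : SplitEpiMap g :=
  (((LinearMap.exact_iff.2 hex.symm).split_tfae hf.injective hg).out 0 1).2 hf

end Split

section Radical

namespace InRad

theorem comp_left {f : X.M →ₗ[R] Y.M} (hf : InRad f) (k : Y.M →ₗ[R] Z.M) : InRad (k.comp f) :=
  fun W hW g h => hf W hW g (h.comp k)

theorem comp_right {f : X.M →ₗ[R] Y.M} (hf : InRad f) (k : W.M →ₗ[R] X.M) : InRad (f.comp k) :=
  fun Z hZ g h => hf Z hZ (k.comp g) h

theorem zero : InRad (0 : X.M →ₗ[R] Y.M) := fun Z hZ g h hb => by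
  have := hZ.1
  obtain ⟨z, hz⟩ := exists_ne (0 : Z.M)
  exact hz (hb.1 (by simp))

theorem neg {f : X.M →ₗ[R] Y.M} (hf : InRad f) : InRad (-f) := by
  simpa using hf.comp_left (-LinearMap.id)

theorem add {f g : X.M →ₗ[R] Y.M} (hf : InRad f) (hg : InRad g) : InRad (f + g) :=
  fun Z hZ i p hb => by
    rw [LinearMap.add_comp, LinearMap.comp_add] at hb
    exact (hZ.bijective_or_bijective_of_add hb).elim (hf Z hZ i p) (hg Z hZ i p)

end InRad

theorem inRad_iff_not_splitMonoMap (hX : X.IsIndec) {f : X.M →ₗ[R] Y.M} :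
    InRad f ↔ ¬SplitMonoMap f := by
  refine ⟨fun hf ⟨r, hr⟩ => hf X hX .id r (by simpa [hr] using Function.bijective_id),
    fun hf Z hZ g h hb => hf ?_⟩
  have := hZ.1
  have hg : Function.Bijective g := (splitMonoMap_of_bijective_comp hb).of_comp.bijective hX
  exact splitMonoMap_of_bijective_comp ((Function.Bijective.of_comp_iff (h.comp f) hg).1 hb)

theorem inRad_iff_not_splitEpiMap (hY : Y.IsIndec) {f : X.M →ₗ[R] Y.M} :
    InRad f ↔ ¬SplitEpiMap f := by
  refine ⟨fun hf ⟨s, hs⟩ => hf Y hY s .id (by simpa [hs] using Function.bijective_id),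
    fun hf Z hZ g h hb => hf ?_⟩
  have := hZ.1
  have hh : Function.Bijective h := (splitEpiMap_of_bijective_comp hb).bijective hY
  exact (splitEpiMap_of_bijective ((Function.Bijective.of_comp_iff' hh (f.comp g)).1 hb)).of_comp

theorem InRad.not_bijective (hX : X.IsIndec) {f : X.M →ₗ[R] Y.M} (hf : InRad f) :
    ¬Function.Bijective f :=
  fun hb => (inRad_iff_not_splitMonoMap hX).1 hf (splitMonoMap_of_bijective hb)

theorem inRad_of_not_bijective (hX : X.IsIndec) (hY : Y.IsIndec) {f : X.M →ₗ[R] Y.M}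
    (hf : ¬Function.Bijective f) : InRad f :=
  have := hX.1
  (inRad_iff_not_splitMonoMap hX).2 fun h => hf (h.bijective hY)

theorem mem_radPow_one {f : X.M →ₗ[R] Y.M} : f ∈ radPow R 1 X Y ↔ InRad f := by
  refine ⟨fun hf => ?_, fun hf => AddSubgroup.subset_closure ⟨Y, f, .id, hf, trivial, rfl⟩⟩
  induction hf using AddSubgroup.closure_induction with
  | mem f hf =>
    obtain ⟨Z, g, h, hg, -, rfl⟩ := hf
    exact hg.comp_left h
  | zero => exact .zero
  | add f g _ _ hf hg => exact hf.add hg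
  | neg f _ hf => exact hf.neg

theorem comp_mem_radPow_succ {n : ℕ} {g : X.M →ₗ[R] Y.M} {h : Y.M →ₗ[R] Z.M} (hg : InRad g)
    (hh : h ∈ radPow R n Y Z) : h.comp g ∈ radPow R (n + 1) X Z :=
  AddSubgroup.subset_closure ⟨Y, g, h, hg, hh, rfl⟩

theorem radPow_succ_le {n : ℕ} {H : AddSubgroup (X.M →ₗ[R] Y.M)}
    (hH : ∀ (Z : ModA R) (g : X.M →ₗ[R] Z.M) (h : Z.M →ₗ[R] Y.M),
      InRad g → h ∈ radPow R n Z Y → h.comp g ∈ H) : radPow R (n + 1) X Y ≤ H :=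
  (AddSubgroup.closure_le _).2 fun _ ⟨Z, g, h, hg, hh, hf⟩ => hf ▸ hH Z g h hg hh

theorem comp_mem_radPow_right {n : ℕ} {f : X.M →ₗ[R] Y.M} (hf : f ∈ radPow R n X Y)
    (k : W.M →ₗ[R] X.M) : f.comp k ∈ radPow R n W Y := by
  cases n with
  | zero => trivial
  | succ n =>
    exact radPow_succ_le (H := (radPow R (n + 1) W Y).comap
      (AddMonoidHom.mk' (fun f => f.comp k) fun f g => LinearMap.add_comp k g f))
      (fun _ _ _ hg hh => (comp_mem_radPow_succ (hg.comp_right k) hh :)) hf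

theorem comp_mem_radPow_add {m n : ℕ} {f : X.M →ₗ[R] Y.M} {g : Y.M →ₗ[R] Z.M}
    (hf : f ∈ radPow R m X Y) (hg : g ∈ radPow R n Y Z) : g.comp f ∈ radPow R (m + n) X Z := by
  induction m generalizing X with
  | zero => simpa using comp_mem_radPow_right hg f
  | succ m ih =>
    rw [Nat.add_right_comm]
    exact radPow_succ_le (H := (radPow R (m + n + 1) X Z).comap
      (AddMonoidHom.mk' (fun f => g.comp f) fun f f' => LinearMap.comp_add f f' g))
      (fun _ _ _ hf hh => (comp_mem_radPow_succ hf (ih hh) :)) hf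

theorem comp_mem_radPow_left {n : ℕ} {f : X.M →ₗ[R] Y.M} (hf : f ∈ radPow R n X Y)
    (k : Y.M →ₗ[R] Z.M) : k.comp f ∈ radPow R n X Z :=
  comp_mem_radPow_add (n := 0) hf trivial

end Radical

section Decomposition

theorem ModA.exists_isIdempotentElem (hZ : ¬Z.IsIndec) [Nontrivial Z.M] :
    ∃ p : Module.End R Z.M, IsIdempotentElem p ∧ p ≠ 0 ∧ p ≠ 1 := by
  simpa [ModA.IsIndec, IsIndecMod, ‹Nontrivial Z.M›, IsIdempotentElem] using hZ

theorem length_range_lt_of_isIdempotentElem {M : Type*} [AddCommGroup M] [Module R M]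
    [IsNoetherian R M] [IsArtinian R M] {p : Module.End R M} (hp : IsIdempotentElem p)
    (hp1 : p ≠ 1) : Module.length R p.range < Module.length R M := by
  refine Submodule.length_lt fun htop => hp1 (LinearMap.ext fun x => ?_)
  obtain ⟨y, rfl⟩ := LinearMap.range_eq_top.1 htop x
  exact LinearMap.congr_fun hp y

theorem comp_mem_of_forall_isIndec {g : X.M →ₗ[R] Z.M} {h : Z.M →ₗ[R] Y.M}
    {H : AddSubgroup (X.M →ₗ[R] Y.M)}
    (hH : ∀ W : ModA R, W.IsIndec → ∀ (π : Z.M →ₗ[R] W.M) (ι : W.M →ₗ[R] Z.M),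
      (h.comp ι).comp (π.comp g) ∈ H) : h.comp g ∈ H := by
  induction hl : Module.length R Z.M using WellFoundedLT.induction generalizing Z with
  | ind l ih =>
  rcases subsingleton_or_nontrivial Z.M with _ | _
  · rw [Subsingleton.elim g 0, LinearMap.comp_zero]
    exact H.zero_mem
  by_cases hZ : Z.IsIndec
  · exact hH Z hZ .id .id
  obtain ⟨p, hp, hp0, hp1⟩ := ModA.exists_isIdempotentElem hZ
  have hcomp (q : Module.End R Z.M) (hq : IsIdempotentElem q) (hq1 : q ≠ 1) :
      h.comp (q.comp g) ∈ H :=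
    ih _ (hl ▸ length_range_lt_of_isIdempotentElem hq hq1) (Z := .of R q.range)
      (g := q.rangeRestrict.comp g) (h := h.comp q.range.subtype)
      (fun W hW π ι => hH W hW (π.comp q.rangeRestrict) (q.range.subtype.comp ι)) rfl
  have hsum : h.comp g = h.comp (p.comp g) + h.comp ((1 - p : Module.End R Z.M).comp g) := by
    ext x
    simp
  rw [hsum]
  exact H.add_mem (hcomp p hp hp1) (hcomp (1 - p) hp.one_sub (by simpa using hp0))

end Decomposition

section Quiver

theorem isIrred_of_notMem_radPow_two (hX : X.IsIndec) (hY : Y.IsIndec) {f : X.M →ₗ[R] Y.M}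
    (hf : InRad f) (hf2 : f ∉ radPow R 2 X Y) : IsIrred f := by
  refine ⟨(inRad_iff_not_splitMonoMap hX).1 hf, (inRad_iff_not_splitEpiMap hY).1 hf, ?_⟩
  rintro Z g h rfl
  by_contra! hgh
  exact hf2 (comp_mem_radPow_succ ((inRad_iff_not_splitMonoMap hX).2 hgh.1)
    (mem_radPow_one.2 ((inRad_iff_not_splitEpiMap hY).2 hgh.2)))

theorem IsIrred.arArrow {X Y : IndecModA R} {f : X.1.M →ₗ[R] Y.1.M} (hf : IsIrred f) :
    ARArrow (.mk X) (.mk Y) :=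
  ⟨X, Y, f, hf, rfl, rfl⟩

/-- `y` can be reached from `x` along an oriented path of `Γ_R`. -/
abbrev ARReaches : ARVertex R → ARVertex R → Prop := Relation.ReflTransGen ARArrow

theorem inRad_of_mk_ne_mk {X Y : IndecModA R} (hXY : ARVertex.mk X ≠ .mk Y)
    (f : X.1.M →ₗ[R] Y.1.M) : InRad f :=
  inRad_of_not_bijective X.2 Y.2 fun hb => hXY (Quotient.sound ⟨LinearEquiv.ofBijective f hb⟩)

theorem inRadInf_of_not_arReaches {X Y : IndecModA R} (hXY : ¬ARReaches (.mk X) (.mk Y))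
    (f : X.1.M →ₗ[R] Y.1.M) : InRadInf f := by
  intro n
  induction n generalizing X with
  | zero => trivial
  | succ n ih =>
    cases n with
    | zero => exact mem_radPow_one.2 (inRad_of_mk_ne_mk (by rintro h; exact hXY (h ▸ .refl)) f)
    | succ n =>
      refine radPow_succ_le (H := radPow R (n + 2) X.1 Y.1) (fun Z g h hg hh => ?_) (ih hXY f)
      refine comp_mem_of_forall_isIndec fun W hW π ι => ?_
      by_cases hWY : ARReaches (.mk ⟨W, hW⟩) (.mk Y)
      · have hπ : π.comp g ∈ radPow R 2 X.1 W := by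
          by_contra hπ
          have harr := (isIrred_of_notMem_radPow_two X.2 hW (hg.comp_left π) hπ).arArrow
            (X := X) (Y := ⟨W, hW⟩)
          exact hXY (.head harr hWY)
        rw [add_comm]
        exact comp_mem_radPow_add hπ (comp_mem_radPow_right hh ι)
      · exact comp_mem_radPow_succ (hg.comp_left π) (ih (X := ⟨W, hW⟩) hWY (h.comp ι))

theorem arReaches_of_notMem_radPow {n : ℕ} {X Y : IndecModA R} {f : X.1.M →ₗ[R] Y.1.M}
    (hf : f ∉ radPow R n X.1 Y.1) : ARReaches (.mk X) (.mk Y) :=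
  by_contra fun hXY => hf (inRadInf_of_not_arReaches hXY f n)

end Quiver

section Irreducible

namespace IsIrred

theorem conj {X' Y' : ModA R} {f : X.M →ₗ[R] Y.M} (hf : IsIrred f) (e : X.M ≃ₗ[R] X'.M)
    (e' : Y.M ≃ₗ[R] Y'.M) :
    IsIrred (X := X') (Y := Y') (e'.toLinearMap.comp (f.comp e.symm.toLinearMap)) := by
  refine ⟨fun ⟨r, hr⟩ => hf.1 ⟨e.symm.toLinearMap.comp (r.comp e'.toLinearMap), ?_⟩,
    fun ⟨s, hs⟩ => hf.2.1 ⟨e.symm.toLinearMap.comp (s.comp e'.toLinearMap), ?_⟩,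
    fun Z g h hgh => (hf.2.2 Z (g.comp e.toLinearMap) (e'.symm.toLinearMap.comp h) ?_).imp
      (fun ⟨r, hr⟩ => ⟨e.toLinearMap.comp r, ?_⟩) fun ⟨s, hs⟩ => ⟨s.comp e'.symm.toLinearMap, ?_⟩⟩
  · ext x; simpa using congrArg e.symm (LinearMap.congr_fun hr (e x))
  · ext y; simpa using congrArg e'.symm (LinearMap.congr_fun hs (e' y))
  · ext x; simpa using congrArg e'.symm (LinearMap.congr_fun hgh (e x))
  · ext x; simpa using congrArg e (LinearMap.congr_fun hr (e.symm x))
  · ext y; simpa using congrArg e' (LinearMap.congr_fun hs (e'.symm y))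

theorem injective_or_surjective {f : X.M →ₗ[R] Y.M} (hf : IsIrred f) :
    Function.Injective f ∨ Function.Surjective f := by
  rcases hf.2.2 (.of R f.range) f.rangeRestrict f.range.subtype rfl with h | h
  · exact .inl fun x y hxy => h.injective (Subtype.ext hxy)
  · exact .inr fun y => let ⟨z, hz⟩ := h.surjective y; let ⟨x, hx⟩ := z.2; ⟨x, hx.trans hz⟩

end IsIrred

end Irreducible

section AlmostSplit

namespace AlmostSplitSeq

variable (s : AlmostSplitSeq R)

theorem exists_comp_f_eq {v : Z.M →ₗ[R] s.m.M} (hv : s.g.comp v = 0) :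
    ∃ w : Z.M →ₗ[R] s.l.M, s.f.comp w = v :=
  exists_comp_eq_of_range_le s.inj (s.exact.ge.trans' (LinearMap.range_le_ker_iff.2 hv))

theorem exists_comp_g_eq {v : s.m.M →ₗ[R] Z.M} (hv : v.comp s.f = 0) :
    ∃ w : s.r.M →ₗ[R] Z.M, w.comp s.g = v :=
  exists_comp_eq_of_ker_le s.surj (s.exact.symm.le.trans (LinearMap.range_le_ker_iff.2 hv))

theorem not_splitMonoMap_f : ¬SplitMonoMap s.f := fun h =>
  s.not_split (h.splitEpiMap s.surj s.exact)

theorem exists_lift_mem_radPow {n : ℕ} {f : Z.M →ₗ[R] s.r.M} (hf : f ∈ radPow R (n + 1) Z s.r) :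
    ∃ k ∈ radPow R n Z s.m, s.g.comp k = f := by
  induction n generalizing Z with
  | zero =>
    obtain ⟨k, hk⟩ := s.right_almost Z f
      ((inRad_iff_not_splitEpiMap s.r_indec).1 (mem_radPow_one.1 hf))
    exact ⟨k, trivial, hk⟩
  | succ n ih =>
    refine radPow_succ_le (H := (radPow R (n + 1) Z s.m).map
      (AddMonoidHom.mk' (fun k => s.g.comp k) fun k k' => LinearMap.comp_add k k' s.g)) ?_ hf
    intro W f h hf hh
    obtain ⟨k, hk, rfl⟩ := ih hh
    exact ⟨k.comp f, comp_mem_radPow_succ hf hk, rfl⟩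

theorem exists_splitMonoMap_of_isIrred {f : X.M →ₗ[R] s.r.M} (hf : IsIrred f) :
    ∃ (l : X.M →ₗ[R] s.m.M) (r : s.m.M →ₗ[R] X.M), s.g.comp l = f ∧ r.comp l = .id := by
  obtain ⟨l, hl⟩ := s.right_almost X f hf.2.1
  obtain ⟨r, hr⟩ := (hf.2.2 _ l s.g hl).resolve_right s.not_split
  exact ⟨l, r, hl, hr⟩

theorem exists_isIrred_of_isIrred (hX : X.IsIndec) {f : X.M →ₗ[R] s.r.M} (hf : IsIrred f) :
    ∃ f' : s.l.M →ₗ[R] X.M, IsIrred f' := by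
  obtain ⟨l, r, rfl, hrl⟩ := s.exists_splitMonoMap_of_isIrred hf
  have hmono : ¬SplitMonoMap (r.comp s.f) := fun h => s.not_splitMonoMap_f h.of_comp
  have hepi : ¬SplitEpiMap (r.comp s.f) := fun h =>
    have := hX.1
    hmono (splitMonoMap_of_bijective (h.bijective s.l_indec))
  refine ⟨r.comp s.f, hmono, hepi, fun Z a b hba => ?_⟩
  refine or_iff_not_imp_left.2 fun ha => ?_
  obtain ⟨a', rfl⟩ := s.left_almost Z a ha
  obtain ⟨u, hu⟩ := s.exists_comp_g_eq (v := b.comp a' - r)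
    (by rw [LinearMap.sub_comp, LinearMap.comp_assoc, hba, sub_self])
  have hul : (u.comp (s.g.comp l) : Module.End R X.M) = b.comp (a'.comp l) - 1 := by
    rw [← LinearMap.comp_assoc, hu, LinearMap.sub_comp, hrl]; rfl
  have hsum : (b.comp (a'.comp l) : Module.End R X.M) + -(u.comp (s.g.comp l)) = 1 := by
    rw [hul, neg_sub, add_sub_cancel]
  have hbij : Function.Bijective (b.comp (a'.comp l) + -(u.comp (s.g.comp l))) := by
    rw [hsum]; exact Function.bijective_id
  rcases hX.bijective_or_bijective_of_add hbij with h | h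
  · exact splitEpiMap_of_bijective_comp h
  · rw [← LinearMap.neg_comp] at h
    exact absurd (splitMonoMap_of_bijective_comp h) hf.1

end AlmostSplitSeq

end AlmostSplit

section Paths

theorem exists_isIrred_of_arArrow {X Y : IndecModA R} (h : ARArrow (.mk X) (.mk Y)) :
    ∃ f : X.1.M →ₗ[R] Y.1.M, IsIrred f := by
  obtain ⟨X', Y', f, hf, hX, hY⟩ := h
  obtain ⟨e⟩ : X'.1.Iso X.1 := Quotient.exact hX
  obtain ⟨e'⟩ : Y'.1.Iso Y.1 := Quotient.exact hY
  exact ⟨_, hf.conj e e'⟩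

theorem IsIrred.inRad (hX : X.IsIndec) {f : X.M →ₗ[R] Y.M} (hf : IsIrred f) : InRad f :=
  (inRad_iff_not_splitMonoMap hX).2 hf.1

/-- `IrredPath P X n Y F` says that `F : X → Y` is the composite of a path of `n` irreducible maps
between indecomposable modules, all of whose vertices except possibly `X` satisfy `P`. -/
inductive IrredPath (P : IndecModA R → Prop) (X : IndecModA R) :
    ℕ → ∀ Y : IndecModA R, (X.1.M →ₗ[R] Y.1.M) → Prop
  | nil : IrredPath P X 0 X .id
  | snoc {n : ℕ} {Y Z : IndecModA R} {F : X.1.M →ₗ[R] Y.1.M} {f : Y.1.M →ₗ[R] Z.1.M}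
      (hF : IrredPath P X n Y F) (hf : IsIrred f) (hZ : P Z) : IrredPath P X (n + 1) Z (f.comp F)

namespace IrredPath

variable {P : IndecModA R → Prop}

theorem arReaches {X Y : IndecModA R} {n : ℕ} {F : X.1.M →ₗ[R] Y.1.M} (hF : IrredPath P X n Y F) :
    ARReaches (.mk X) (.mk Y) := by
  induction hF with
  | nil => exact .refl
  | snoc _ hf _ ih => exact ih.tail hf.arArrow

theorem inRad {X Y : IndecModA R} {n : ℕ} {F : X.1.M →ₗ[R] Y.1.M}
    (hF : IrredPath P X (n + 1) Y F) : InRad F := by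
  cases hF with
  | snoc _ hf _ => exact (hf.inRad (Subtype.prop _)).comp_right _

theorem trans {X Y Z : IndecModA R} {m n : ℕ} {F : X.1.M →ₗ[R] Y.1.M} {G : Y.1.M →ₗ[R] Z.1.M}
    (hF : IrredPath P X m Y F) (hG : IrredPath P Y n Z G) : IrredPath P X (m + n) Z (G.comp F) := by
  induction hG with
  | nil => exact hF
  | snoc _ hf hZ ih => exact ih.snoc hf hZ

theorem pow {X : IndecModA R} {n : ℕ} {F : Module.End R X.1.M} (hF : IrredPath P X n X F) (m : ℕ) :
    IrredPath P X (m * n) X (F ^ m) := by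
  induction m with
  | zero =>
    rw [Nat.zero_mul]
    exact nil
  | succ m ih =>
    rw [Nat.succ_mul, pow_succ']
    exact ih.trans hF

theorem exists_tail {X Y : IndecModA R} {n : ℕ} {F : X.1.M →ₗ[R] Y.1.M} {Q : IndecModA R → Prop}
    (hF : IrredPath Q X n Y F) : IrredPath P X n Y F ∨
      ∃ (Z : IndecModA R) (m : ℕ) (G : Z.1.M →ₗ[R] Y.1.M),
        ARReaches (.mk X) (.mk Z) ∧ ¬P Z ∧ IrredPath P Z m Y G := by
  induction hF with
  | nil => exact .inl nil
  | @snoc n Y Z F f hF hf hZ ih =>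
    by_cases hPZ : P Z
    · exact ih.imp (·.snoc hf hPZ) fun ⟨W, m, G, hXW, hPW, hG⟩ =>
        ⟨W, m + 1, f.comp G, hXW, hPW, hG.snoc hf hPZ⟩
    · exact .inr ⟨Z, 0, .id, (hF.snoc hf hZ).arReaches, hPZ, nil⟩

end IrredPath

theorem exists_irredPath_of_transGen {X Y : IndecModA R}
    (h : Relation.TransGen ARArrow (.mk X) (.mk Y)) :
    ∃ (n : ℕ) (F : X.1.M →ₗ[R] Y.1.M), IrredPath (fun _ => True) X (n + 1) Y F := by
  generalize hy : ARVertex.mk Y = y at h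
  induction h generalizing Y with
  | single h =>
    subst hy
    obtain ⟨f, hf⟩ := exists_isIrred_of_arArrow h
    exact ⟨0, _, IrredPath.nil.snoc hf trivial⟩
  | tail _ h ih =>
    subst hy
    obtain ⟨Z, rfl⟩ := Quotient.exists_rep ‹ARVertex R›
    obtain ⟨f, hf⟩ := exists_isIrred_of_arArrow (X := Z) h
    obtain ⟨n, F, hF⟩ := ih rfl
    exact ⟨n + 1, _, hF.snoc hf trivial⟩

theorem OnARCycle.exists_irredPath_zero {Y : IndecModA R} (hY : OnARCycle (.mk Y)) :
    ∃ n : ℕ, IrredPath (fun _ => True) Y n Y 0 := by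
  obtain ⟨n, F, hF⟩ := exists_irredPath_of_transGen hY
  obtain ⟨m, hm⟩ := (Y.2.isUnit_or_isNilpotent F).resolve_left
    (hF.inRad.not_bijective Y.2 <| (Module.End.isUnit_iff F).1 ·)
  exact ⟨_, hm ▸ hF.pow m⟩

end Paths

section IgusaTodorov

/-- `Y` is the right end term of an almost split sequence. -/
def EndsAlmostSplitSeq (Y : IndecModA R) : Prop := ∃ s : AlmostSplitSeq R, s.r = Y.1

theorem IrredPath.arReaches_of_mem_radPow {X Y Z : IndecModA R} {n : ℕ}
    {F : Z.1.M →ₗ[R] Y.1.M} (hF : IrredPath EndsAlmostSplitSeq Z n Y F)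
    (hrad : F ∈ radPow R (n + 1) Z.1 Y.1) {g : X.1.M →ₗ[R] Y.1.M} (hg : IsIrred g) :
    ARReaches (.mk Z) (.mk X) := by
  induction hF generalizing X with
  | nil => exact absurd Function.bijective_id ((mem_radPow_one.1 hrad).not_bijective Z.2)
  | @snoc n Y Y' F f _ hf hY' ih =>
    obtain ⟨Y', _⟩ := Y'
    obtain ⟨s, rfl⟩ := hY'
    obtain ⟨t, ht⟩ := s.exists_isIrred_of_isIrred X.2 hg
    refine .tail (b := .mk ⟨s.l, s.l_indec⟩) ?_ (IsIrred.arArrow (X := ⟨s.l, s.l_indec⟩) ht)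
    by_cases hFrad : F ∈ radPow R (n + 1) Z.1 Y.1
    · obtain ⟨t, ht⟩ := s.exists_isIrred_of_isIrred Y.2 hf
      exact ih hFrad (X := ⟨s.l, s.l_indec⟩) ht
    · obtain ⟨k, hk, hkf⟩ := s.exists_lift_mem_radPow hrad
      obtain ⟨l, r, rfl, hrl⟩ := s.exists_splitMonoMap_of_isIrred hf
      obtain ⟨v, hv⟩ := s.exists_comp_f_eq (v := l.comp F - k)
        (by rw [LinearMap.comp_sub, hkf]; exact sub_self _)
      refine arReaches_of_notMem_radPow (f := v) (n := n + 1) fun hvrad => hFrad ?_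
      have hlF : l.comp F ∈ radPow R (n + 1) Z.1 s.m := by
        rw [← sub_add_cancel (l.comp F) k, ← hv]
        exact add_mem (comp_mem_radPow_left hvrad s.f) hk
      have hrlF : r.comp (l.comp F) = F := by rw [← LinearMap.comp_assoc, hrl, LinearMap.id_comp]
      exact hrlF ▸ comp_mem_radPow_left hlF r

theorem arReaches_of_isIrred_of_surjective {X Y : IndecModA R} {g : X.1.M →ₗ[R] Y.1.M}
    (hR : ∀ Z : IndecModA R, Module.Projective R Z.1.M ∨ EndsAlmostSplitSeq Z)
    (hg : IsIrred g) (hsurj : Function.Surjective g) (hY : OnARCycle (.mk Y)) :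
    ARReaches (.mk Y) (.mk X) := by
  obtain ⟨n, h0⟩ := hY.exists_irredPath_zero
  rcases h0.exists_tail (P := EndsAlmostSplitSeq) with h0 | ⟨Z, m, G, hYZ, hZ, hG⟩
  · exact h0.arReaches_of_mem_radPow (zero_mem _) hg
  refine hYZ.trans ?_
  by_cases hGrad : G ∈ radPow R (m + 1) Z.1 Y.1
  · exact hG.arReaches_of_mem_radPow hGrad hg
  · have := (hR Z).resolve_right hZ
    obtain ⟨w, rfl⟩ := Module.projective_lifting_property g G hsurj
    exact arReaches_of_notMem_radPow fun hw => hGrad (comp_mem_radPow_left hw g)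

end IgusaTodorov

section RightAlmostSplit

/-- `e : E → Y` is a right almost split map. -/
def IsRightAlmostSplit {E Y : ModA R} (e : E.M →ₗ[R] Y.M) : Prop :=
  ¬SplitEpiMap e ∧
    ∀ (Z : ModA R) (h : Z.M →ₗ[R] Y.M), ¬SplitEpiMap h → ∃ h' : Z.M →ₗ[R] E.M, e.comp h' = h

/-- `e : E → Y` is a right minimal map. -/
def IsRightMinimal {E Y : ModA R} (e : E.M →ₗ[R] Y.M) : Prop :=
  ∀ φ : E.M →ₗ[R] E.M, e.comp φ = e → Function.Bijective φ

namespace IsRightAlmostSplit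

variable {E : ModA R} {e : E.M →ₗ[R] Y.M}

theorem domRestrict_range (he : IsRightAlmostSplit e) {φ : E.M →ₗ[R] E.M} (hφ : e.comp φ = e) :
    IsRightAlmostSplit (E := .of R φ.range) (e.comp φ.range.subtype) := by
  refine ⟨fun h => he.1 h.of_comp, fun Z h hh => ?_⟩
  obtain ⟨k, rfl⟩ := he.2 Z h hh
  exact ⟨φ.rangeRestrict.comp k, congrArg (LinearMap.comp · k) hφ⟩

theorem exists_isRightMinimal (he : IsRightAlmostSplit e) :
    ∃ (E' : ModA R) (e' : E'.M →ₗ[R] Y.M), IsRightAlmostSplit e' ∧ IsRightMinimal e' := by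
  induction hl : Module.length R E.M using WellFoundedLT.induction generalizing E with
  | ind l ih =>
  by_cases hmin : IsRightMinimal e
  · exact ⟨E, e, he, hmin⟩
  simp only [IsRightMinimal, not_forall] at hmin
  obtain ⟨φ, hφ, hbij⟩ := hmin
  have hlt : Module.length R φ.range < Module.length R E.M := Submodule.length_lt fun htop =>
    hbij (IsNoetherian.bijective_of_surjective_endomorphism φ (LinearMap.range_eq_top.1 htop))
  exact ih _ (hl ▸ hlt) (he.domRestrict_range hφ) rfl

theorem surjective_of_not_projective [IsArtinianRing R] (he : IsRightAlmostSplit e)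
    (hY : ¬Module.Projective R Y.M) : Function.Surjective e := by
  obtain ⟨n, p, hp⟩ := Module.Finite.exists_fin' R Y.M
  have hsplit : ¬SplitEpiMap (X := .of R (Fin n → R)) p := fun ⟨s, hs⟩ =>
    hY (Module.Projective.of_split s p hs)
  obtain ⟨k, rfl⟩ := he.2 (.of R (Fin n → R)) p hsplit
  exact .of_comp hp

end IsRightAlmostSplit

theorem exists_pushout_ker {E : ModA R} (e : E.M →ₗ[R] Y.M) (a : e.ker →ₗ[R] W.M) :
    ∃ (P : ModA R) (i : W.M →ₗ[R] P.M) (j : E.M →ₗ[R] P.M) (q : P.M →ₗ[R] Y.M),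
      i.comp a = j.comp e.ker.subtype ∧ q.comp j = e ∧ q.ker = i.range ∧ Function.Injective i := by
  let N := pushoutRel e.ker.subtype a
  have hN : N ≤ (e.comp (LinearMap.fst R E.M W.M)).ker := by
    rintro _ ⟨c, rfl⟩
    exact c.2
  refine ⟨.of R ((E.M × W.M) ⧸ N), N.mkQ.comp (.inr R E.M W.M), N.mkQ.comp (.inl R E.M W.M),
    N.liftQ _ hN, mkQ_inr_comp_eq_mkQ_inl_comp, LinearMap.ext fun x => rfl,
    le_antisymm (fun t ht => ?_) ?_, injective_mkQ_comp_inr e.ker.injective_subtype⟩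
  · obtain ⟨⟨x, w⟩, rfl⟩ := N.mkQ_surjective t
    refine ⟨w + a ⟨x, ht⟩, ((Submodule.Quotient.eq N).2 ⟨⟨x, ht⟩, ?_⟩).symm⟩
    simp
  · rintro _ ⟨w, rfl⟩
    exact map_zero e

section LeftAlmostSplit

variable {E : ModA R} {e : E.M →ₗ[R] Y.M}

theorem exists_extension_of_not_splitMonoMap (he : IsRightAlmostSplit e) (hmin : IsRightMinimal e)
    {a : (ModA.of R e.ker).M →ₗ[R] W.M} (ha : ¬SplitMonoMap a) :
    ∃ a' : E.M →ₗ[R] W.M, a'.comp e.ker.subtype = a := by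
  obtain ⟨P, i, j, q, hij, hqj, hq, hi⟩ := exists_pushout_ker e a
  by_cases hsplit : SplitEpiMap q
  · obtain ⟨s, hs⟩ := hsplit
    have hθ : (j - s.comp e).range ≤ i.range := by
      rw [← hq, LinearMap.range_le_ker_iff, LinearMap.comp_sub, hqj, ← LinearMap.comp_assoc, hs]
      exact sub_self e
    obtain ⟨a', ha'⟩ := exists_comp_eq_of_range_le hi hθ
    refine ⟨a', (LinearMap.cancel_left hi).1 ?_⟩
    rw [← LinearMap.comp_assoc, ha', hij, LinearMap.sub_comp, LinearMap.comp_assoc,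
      e.comp_ker_subtype, LinearMap.comp_zero, sub_zero]
  · obtain ⟨ψ, hψ⟩ := he.2 P q hsplit
    have hφ : e.comp (ψ.comp j) = e := by rw [← LinearMap.comp_assoc, hψ, hqj]
    have hψi (w : W.M) : e (ψ (i w)) = 0 :=
      (LinearMap.congr_fun hψ (i w)).trans (hq.ge ⟨w, rfl⟩)
    have hinj : Function.Injective (((ψ.comp i).codRestrict e.ker hψi).comp a) := fun x y hxy =>
      Subtype.ext <| (hmin _ hφ).1 <| by
        have hxy : (ψ.comp (i.comp a)) x = (ψ.comp (i.comp a)) y := congrArg Subtype.val hxy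
        rwa [hij] at hxy
    exact absurd (splitMonoMap_of_bijective_comp (X := .of R e.ker) (Z := .of R e.ker)
      (IsArtinian.bijective_of_injective_endomorphism _ hinj)) ha

theorem isIndec_ker (he : IsRightAlmostSplit e) (hmin : IsRightMinimal e)
    (hsurj : Function.Surjective e) : (ModA.of R e.ker).IsIndec := by
  refine ⟨?_, fun p hp => ?_⟩
  · by_contra h
    rw [Submodule.nontrivial_iff_ne_bot, not_not, LinearMap.ker_eq_bot] at h
    exact he.1 (splitEpiMap_of_bijective ⟨h, hsurj⟩)
  · by_contra! hp01
    have not_split {q : Module.End R e.ker} (hq : IsIdempotentElem q) (hq1 : q ≠ 1) :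
        ¬SplitMonoMap (X := .of R e.ker) (Y := .of R e.ker) q := fun ⟨r, hr⟩ => hq1 <| by
      rw [← one_mul q, ← show (r * q : Module.End R e.ker) = 1 from hr, mul_assoc, hq.eq]
    obtain ⟨a, ha⟩ := exists_extension_of_not_splitMonoMap he hmin (not_split hp hp01.2)
    obtain ⟨b, hb⟩ := exists_extension_of_not_splitMonoMap he hmin
      (not_split (IsIdempotentElem.one_sub hp) (by simpa using hp01.1))
    have hsplit : SplitMonoMap (X := .of R e.ker) e.ker.subtype :=
      ⟨a + b, by rw [LinearMap.add_comp, ha, hb]; exact add_sub_cancel p 1⟩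
    exact he.1 (hsplit.splitEpiMap hsurj e.ker.range_subtype)

theorem exists_almostSplitSeq_of_isRightAlmostSplit [IsArtinianRing R] (hY : Y.IsIndec)
    (hproj : ¬Module.Projective R Y.M) (he : IsRightAlmostSplit e) :
    ∃ s : AlmostSplitSeq R, s.r = Y := by
  obtain ⟨E, e, he, hmin⟩ := he.exists_isRightMinimal
  have hsurj := he.surjective_of_not_projective hproj
  exact ⟨{
    l := .of R e.ker
    m := E
    r := Y
    f := e.ker.subtype
    g := e
    inj := e.ker.injective_subtype
    surj := hsurj
    exact := e.ker.range_subtype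
    not_split := he.1
    l_indec := isIndec_ker he hmin hsurj
    r_indec := hY
    right_almost := he.2
    left_almost := fun _ _ => exists_extension_of_not_splitMonoMap he hmin }, rfl⟩

end LeftAlmostSplit

end RightAlmostSplit

section Dualizing

variable {K M N : Type u} [CommRing K] [AddCommGroup M] [Module K M] [AddCommGroup N] [Module K N]

/-- Every simple module occurs at most once in the socle of `E`. The definition is phrased with
`Hom(S, E)` so that it does not depend on endomorphism rings of simple modules: `K` is
commutative, hence `Hom(S, S) ≅ S`. -/
def HasMultiplicityFreeSocle (K E : Type u) [CommRing K] [AddCommGroup E] [Module K E] : Prop :=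
  ∀ (S : Type u) [AddCommGroup S] [Module K S] [IsSimpleModule K S],
    Module.length K (S →ₗ[K] E) ≤ 1

theorem hasMultiplicityFreeSocle_of_isSimpleModule [IsSimpleModule K M] :
    HasMultiplicityFreeSocle K M := fun S _ _ _ => by
  have := IsSimpleModule.nontrivial K S
  obtain ⟨s, hs⟩ := exists_ne (0 : S)
  have hinj : Function.Injective (LinearMap.applyₗ s : (S →ₗ[K] M) →ₗ[K] M) := fun f g hfg => by
    refine LinearMap.ext fun t => ?_
    obtain ⟨a, rfl⟩ := IsSimpleModule.toSpanSingleton_surjective K hs t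
    simpa using congrArg (a • ·) hfg
  exact (Module.length_le_of_injective _ hinj).trans (Module.length_eq_one K M).le

theorem exists_essential_mkQ_comp [IsNoetherian K N] {i : M →ₗ[K] N} (hi : Function.Injective i) :
    ∃ C : Submodule K N, Function.Injective (C.mkQ.comp i) ∧
      ∀ D : Submodule K (N ⧸ C), Disjoint D (C.mkQ.comp i).range → D = ⊥ := by
  obtain ⟨C, hC, hmax⟩ := set_has_maximal_iff_noetherian.2 ‹IsNoetherian K N›
    {C | Disjoint C i.range} ⟨⊥, disjoint_bot_left⟩
  have hinj : Function.Injective (C.mkQ.comp i) := by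
    rw [injective_iff_map_eq_zero]
    intro x hx
    have hxC : i x ∈ C := (Submodule.Quotient.mk_eq_zero C).1 hx
    exact hi ((Submodule.disjoint_def.1 hC _ hxC ⟨x, rfl⟩).trans (map_zero i).symm)
  refine ⟨C, hinj, fun D hD => ?_⟩
  have hdisj : Disjoint (D.comap C.mkQ) i.range := by
    rw [Submodule.disjoint_def]
    rintro _ hx ⟨x, rfl⟩
    have hx0 : C.mkQ.comp i x = 0 := Submodule.disjoint_def.1 hD _ hx ⟨x, rfl⟩
    rw [hinj (hx0.trans (map_zero _).symm), map_zero]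
  have hle : C ≤ D.comap C.mkQ := by simpa using C.mkQ.ker_le_comap (p := D)
  rw [← Submodule.map_comap_eq_of_surjective C.mkQ_surjective D,
    ← eq_of_le_of_not_lt hle (hmax _ hdisj), C.mkQ_map_self]

namespace HasMultiplicityFreeSocle

theorem of_essential (hM : HasMultiplicityFreeSocle K M) {k : M →ₗ[K] N}
    (hk : Function.Injective k) (hess : ∀ D : Submodule K N, Disjoint D k.range → D = ⊥) :
    HasMultiplicityFreeSocle K N := fun S _ _ _ => by
  refine (Module.length_le_of_surjective (LinearMap.compRight K k) fun f => ?_).trans (hM S)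
  refine exists_comp_eq_of_range_le hk ?_
  by_cases hf : f = 0
  · simp [hf]
  have hatom : IsAtom f.range := isSimpleModule_iff_isAtom.1 <|
    .congr (LinearEquiv.ofInjective f (LinearMap.injective_of_ne_zero hf)).symm
  exact hatom.not_disjoint_iff_le.1 fun h => hf (LinearMap.range_eq_bot.1 (hess _ h))

theorem prod_of_isSimpleModule (hM : HasMultiplicityFreeSocle K M) [IsSimpleModule K N]
    (hN : ∀ f : N →ₗ[K] M, f = 0) : HasMultiplicityFreeSocle K (M × N) := fun S _ _ _ => by
  rw [← (LinearMap.prodEquiv K (M := S) (M₂ := M) (M₃ := N)).length_eq, Module.length_prod]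
  rcases subsingleton_or_nontrivial (S →ₗ[K] N) with hS | hS
  · rw [Module.length_eq_zero (M := S →ₗ[K] N), add_zero]
    exact hM S
  · obtain ⟨f, hf⟩ := exists_ne (0 : S →ₗ[K] N)
    have : Subsingleton (S →ₗ[K] M) := subsingleton_of_forall_eq 0 fun g => by
      rw [← LinearMap.cancel_right (LinearEquiv.ofBijective f
        (LinearMap.bijective_of_ne_zero hf)).symm.surjective]
      exact (hN _).trans (LinearMap.zero_comp _).symm
    rw [Module.length_eq_zero (M := S →ₗ[K] M), zero_add]
    exact hasMultiplicityFreeSocle_of_isSimpleModule S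

theorem length_hom_le {E : Type u} [AddCommGroup E] [Module K E]
    (hE : HasMultiplicityFreeSocle K E) (hM : IsFiniteLength K M) :
    Module.length K (M →ₗ[K] E) ≤ Module.length K M := by
  induction hM with
  | of_subsingleton => simp [Module.length_eq_zero]
  | @of_simple_quotient M _ _ N _ _ ih =>
    have hexact := LinearMap.exact_lcomp_of_exact_of_surjective E (LinearMap.exact_subtype_mkQ N)
      N.mkQ_surjective
    rw [Module.length_eq_add_of_exact N.subtype N.mkQ N.injective_subtype N.mkQ_surjective
        (LinearMap.exact_subtype_mkQ N), Module.length_eq_one K (M ⧸ N), add_comm,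
      Module.length_eq_add_of_exact _ (N.subtype.lcomp K E).rangeRestrict
        (LinearMap.lcomp_injective_of_surjective _ N.mkQ_surjective)
        (LinearMap.surjective_rangeRestrict _) fun f => by
          rw [← hexact f, Subtype.ext_iff]; rfl]
    exact add_le_add (hE _)
      ((Module.length_le_of_injective _ (Submodule.injective_subtype _)).trans ih)

theorem length_le_length_self [IsArtinianRing K] (hM : HasMultiplicityFreeSocle K M) :
    Module.length K M ≤ Module.length K K := by
  rw [← (LinearMap.ringLmapEquivSelf K K M).length_eq]
  exact hM.length_hom_le (isFiniteLength_iff_isNoetherian_isArtinian.2 ⟨inferInstance, ‹_›⟩)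

end HasMultiplicityFreeSocle

/- The module found here is the injective hull of a direct sum of simple modules, one from each
isomorphism class; choosing it by maximal length avoids constructing that hull. -/
theorem exists_hasMultiplicityFreeSocle_forall_length_le (K : Type u) [CommRing K]
    [IsArtinianRing K] :
    ∃ (E : Type u) (_ : AddCommGroup E) (_ : Module K E), HasMultiplicityFreeSocle K E ∧
      IsFiniteLength K E ∧ ∀ (F : Type u) [AddCommGroup F] [Module K F],
        HasMultiplicityFreeSocle K F → Module.length K F ≤ Module.length K E := by
  let s : Set ℕ∞ := {n | ∃ (E : Type u) (_ : AddCommGroup E) (_ : Module K E),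
    HasMultiplicityFreeSocle K E ∧ Module.length K E = n}
  have hs : sSup s < ⊤ := lt_of_le_of_lt (sSup_le fun n ⟨E, _, _, hE, hn⟩ =>
    hn ▸ hE.length_le_length_self) (lt_top_iff_ne_top.2 (Module.length_ne_top (R := K)))
  have : Nonempty s := ⟨_, PUnit, inferInstance, inferInstance,
    fun S _ _ _ => by simp [Module.length_eq_zero], rfl⟩
  obtain ⟨E, _, _, hE, hlen⟩ := ENat.sSup_mem_of_nonempty_of_lt_top hs
  refine ⟨E, _, _, hE, Module.length_ne_top_iff.1 (hlen ▸ hs.ne), fun F _ _ hF => ?_⟩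
  rw [hlen]
  exact le_sSup ⟨F, _, _, hF, rfl⟩

section MaximalLength

variable {E : Type u} [AddCommGroup E] [Module K E]

theorem HasMultiplicityFreeSocle.exists_retraction (hE : HasMultiplicityFreeSocle K E)
    (hmax : ∀ (F : Type u) [AddCommGroup F] [Module K F],
      HasMultiplicityFreeSocle K F → Module.length K F ≤ Module.length K E)
    [IsNoetherian K N] [IsArtinian K N] {i : E →ₗ[K] N} (hi : Function.Injective i) :
    ∃ r : N →ₗ[K] E, r.comp i = .id := by
  obtain ⟨C, hinj, hess⟩ := exists_essential_mkQ_comp hi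
  have hsurj : Function.Surjective (C.mkQ.comp i) := by
    rw [← LinearMap.range_eq_top]
    by_contra hne
    refine (Submodule.length_lt hne).not_ge ?_
    rw [← (LinearEquiv.ofInjective _ hinj).length_eq]
    exact hmax _ (hE.of_essential hinj hess)
  let k := LinearEquiv.ofBijective (C.mkQ.comp i) ⟨hinj, hsurj⟩
  exact ⟨k.symm.toLinearMap.comp C.mkQ, LinearMap.ext k.symm_apply_apply⟩

theorem HasMultiplicityFreeSocle.injective [IsArtinianRing K] (hE : HasMultiplicityFreeSocle K E)
    (hfin : IsFiniteLength K E) (hmax : ∀ (F : Type u) [AddCommGroup F] [Module K F],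
      HasMultiplicityFreeSocle K F → Module.length K F ≤ Module.length K E) :
    Module.Injective K E := by
  obtain ⟨_, _⟩ := isFiniteLength_iff_isNoetherian_isArtinian.1 hfin
  refine Module.Baer.injective fun I g => ?_
  obtain ⟨r, hr⟩ := hE.exists_retraction hmax
    (injective_mkQ_comp_inr (g := g) I.injective_subtype)
  refine ⟨r.comp ((pushoutRel I.subtype g).mkQ.comp (.inl K K E)), fun x hx => ?_⟩
  rw [LinearMap.comp_apply]
  exact (congrArg r (LinearMap.congr_fun mkQ_inr_comp_eq_mkQ_inl_comp ⟨x, hx⟩)).symm.trans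
    (LinearMap.congr_fun hr _)

theorem HasMultiplicityFreeSocle.exists_ne_zero (hE : HasMultiplicityFreeSocle K E)
    (hfin : IsFiniteLength K E) (hmax : ∀ (F : Type u) [AddCommGroup F] [Module K F],
      HasMultiplicityFreeSocle K F → Module.length K F ≤ Module.length K E)
    (S : Type u) [AddCommGroup S] [Module K S] [IsSimpleModule K S] :
    ∃ f : S →ₗ[K] E, f ≠ 0 := by
  by_contra! h
  have hle := hmax _ (hE.prod_of_isSimpleModule h)
  rw [Module.length_prod, Module.length_eq_one K S] at hle
  exact (ENat.lt_add_one_iff (Module.length_ne_top_iff.2 hfin)).2 le_rfl |>.not_ge hle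

end MaximalLength

/-- `E` is an injective cogenerator with multiplicity-free socle, so that `Hom(-, E)` is a duality
on modules of finite length (Matlis duality). -/
structure IsDualizingModule (K E : Type u) [CommRing K] [AddCommGroup E] [Module K E] : Prop where
  socle : HasMultiplicityFreeSocle K E
  injective : Module.Injective K E
  exists_ne_zero : ∀ (S : Type u) [AddCommGroup S] [Module K S] [IsSimpleModule K S],
    ∃ f : S →ₗ[K] E, f ≠ 0

theorem exists_isDualizingModule (K : Type u) [CommRing K] [IsArtinianRing K] :
    ∃ (E : Type u) (_ : AddCommGroup E) (_ : Module K E), IsDualizingModule K E :=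
  let ⟨E, _, _, hE, hfin, hmax⟩ := exists_hasMultiplicityFreeSocle_forall_length_le K
  ⟨E, _, _, hE, hE.injective hfin hmax, hE.exists_ne_zero hfin hmax⟩

namespace IsDualizingModule

variable {E : Type u} [AddCommGroup E] [Module K E]

theorem exists_comp_eq (hE : IsDualizingModule K E) {f : M →ₗ[K] N} (hf : Function.Injective f)
    (g : M →ₗ[K] E) : ∃ h : N →ₗ[K] E, h.comp f = g :=
  (hE.injective.out f hf g).imp fun _ => LinearMap.ext

theorem exists_comp_eq_of_ker_le (hE : IsDualizingModule K E) {f : M →ₗ[K] N} {g : M →ₗ[K] E}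
    (h : f.ker ≤ g.ker) : ∃ k : N →ₗ[K] E, k.comp f = g := by
  obtain ⟨g', rfl⟩ := _root_.exists_comp_eq_of_ker_le f.surjective_rangeRestrict
    (f.ker_rangeRestrict.trans_le h)
  obtain ⟨k, rfl⟩ := hE.exists_comp_eq f.range.injective_subtype g'
  exact ⟨k, rfl⟩

theorem exists_apply_ne_zero (hE : IsDualizingModule K E) {x : M} (hx : x ≠ 0) :
    ∃ φ : M →ₗ[K] E, φ x ≠ 0 := by
  have hne : Submodule.span K {x} ≠ ⊥ := by simpa using hx
  have := (Submodule.nontrivial_iff_ne_bot).2 hne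
  obtain ⟨C, hC⟩ := IsCoatomic.exists_coatom (Submodule K (Submodule.span K {x}))
  have := isSimpleModule_iff_isCoatom.2 hC
  obtain ⟨f, hf⟩ := hE.exists_ne_zero (_ ⧸ C)
  obtain ⟨φ, hφ⟩ := hE.exists_comp_eq (Submodule.span K {x}).injective_subtype (f.comp C.mkQ)
  refine ⟨φ, fun h0 => hf ?_⟩
  rw [← LinearMap.cancel_right C.mkQ_surjective, ← hφ]
  refine LinearMap.ext fun ⟨y, hy⟩ => ?_
  obtain ⟨a, rfl⟩ := Submodule.mem_span_singleton.1 hy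
  simp [h0]

theorem exists_le_ker_apply_ne_zero (hE : IsDualizingModule K E) {L : Submodule K M} {x : M}
    (hx : x ∉ L) : ∃ φ : M →ₗ[K] E, L ≤ φ.ker ∧ φ x ≠ 0 := by
  obtain ⟨φ, hφ⟩ := hE.exists_apply_ne_zero (mt (Submodule.Quotient.mk_eq_zero L).1 hx)
  refine ⟨φ.comp L.mkQ, fun n hn => ?_, hφ⟩
  simp [(Submodule.Quotient.mk_eq_zero L).2 hn]

theorem isFiniteLength_hom (hE : IsDualizingModule K E) (hM : IsFiniteLength K M) :
    IsFiniteLength K (M →ₗ[K] E) :=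
  Module.length_ne_top_iff.1
    ((hE.socle.length_hom_le hM).trans_lt (Module.length_ne_top_iff.2 hM).lt_top).ne

theorem bijective_applyₗ (hE : IsDualizingModule K E) (hM : IsFiniteLength K M) :
    Function.Bijective (LinearMap.applyₗ : M →ₗ[K] (M →ₗ[K] E) →ₗ[K] E) := by
  have hinj : Function.Injective (LinearMap.applyₗ : M →ₗ[K] (M →ₗ[K] E) →ₗ[K] E) := by
    rw [injective_iff_map_eq_zero]
    intro x hx
    by_contra h
    obtain ⟨φ, hφ⟩ := hE.exists_apply_ne_zero h
    exact hφ (LinearMap.congr_fun hx φ)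
  have hdual := hE.isFiniteLength_hom hM
  obtain ⟨_, _⟩ := isFiniteLength_iff_isNoetherian_isArtinian.1 (hE.isFiniteLength_hom hdual)
  refine ⟨hinj, LinearMap.range_eq_top.1 ?_⟩
  by_contra hne
  refine (Submodule.length_lt hne).not_ge ?_
  rw [← (LinearEquiv.ofInjective _ hinj).length_eq]
  exact (hE.socle.length_hom_le hdual).trans (hE.socle.length_hom_le hM)

end IsDualizingModule

end Dualizing

section Duality

variable {K : Type u} [CommRing K] [Algebra K R]

instance (priority := low) ModA.moduleBase (X : ModA R) : Module K X.M :=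
  Module.compHom X.M (algebraMap K R)

instance ModA.isScalarTowerBase (X : ModA R) : IsScalarTower K R X.M :=
  .of_algebraMap_smul fun _ _ => rfl

theorem ModA.isFiniteLength_base [IsArtinianRing K] [Module.Finite K R] (X : ModA R) :
    IsFiniteLength K X.M :=
  have : Module.Finite K X.M := .trans R X.M
  isFiniteLength_iff_isNoetherian_isArtinian.2 ⟨inferInstance, inferInstance⟩

variable {S : Type u} [Ring S] [Algebra K S] {E : Type u} [AddCommGroup E] [Module K E]

/-- The `S`-module structure on `Hom_K(X, E)` for a right `S`-module `X`; right modules over `S`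
are encoded as left modules over a ring `R` identified with `Sᵐᵒᵖ`. -/
abbrev ModA.dualModule (e : S ≃ₐ[K] Rᵐᵒᵖ) (X : ModA R) (E : Type u) [AddCommGroup E] [Module K E] :
    Module S (X.M →ₗ[K] E) where
  smul s φ := φ.comp (Module.toModuleEnd K X.M (e s).unop)
  one_smul φ := by ext x; change φ ((e 1).unop • x) = φ x; simp
  mul_smul s t φ := by
    ext x; change φ ((e (s * t)).unop • x) = φ ((e t).unop • (e s).unop • x); simp [mul_smul]
  smul_zero s := rfl
  smul_add s φ χ := rfl
  add_smul s t φ := by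
    ext x
    change φ ((e (s + t)).unop • x) = φ ((e s).unop • x) + φ ((e t).unop • x)
    simp [add_smul]
  zero_smul φ := by ext x; change φ ((e 0).unop • x) = 0; simp

theorem ModA.unop_algebraMap_smul (e : S ≃ₐ[K] Rᵐᵒᵖ) (c : K) (x : X.M) :
    (e (algebraMap K S c)).unop • x = c • x := by
  simp [MulOpposite.algebraMap_apply]

variable [IsArtinianRing K] [Module.Finite K R] {e : S ≃ₐ[K] Rᵐᵒᵖ} {hE : IsDualizingModule K E}

namespace ModA

/-- The duality `Hom_K(-, E)`, taking right `S`-modules (encoded over `R ≃ Sᵐᵒᵖ`) to left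
`S`-modules. -/
def dual (e : S ≃ₐ[K] Rᵐᵒᵖ) (hE : IsDualizingModule K E) (X : ModA R) : ModA S :=
  letI := dualModule e X E
  haveI : IsScalarTower K S (X.M →ₗ[K] E) := .of_algebraMap_smul fun c φ => LinearMap.ext fun x =>
    (congrArg φ (unop_algebraMap_smul e c x)).trans (map_smul φ c x)
  have hfin := isFiniteLength_iff_isNoetherian_isArtinian.1 (hE.isFiniteLength_hom
    (X.isFiniteLength_base (K := K)))
  haveI := hfin.1
  haveI := hfin.2
  haveI := isNoetherian_of_tower (S := S) (M := X.M →ₗ[K] E) K inferInstance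
  haveI := isArtinian_of_tower (S := S) (M := X.M →ₗ[K] E) K inferInstance
  .of S (X.M →ₗ[K] E)

/-- The elements of `X.dual e hE` as functionals on `X`. -/
def dualEquiv (e : S ≃ₐ[K] Rᵐᵒᵖ) (hE : IsDualizingModule K E) (X : ModA R) :
    (X.dual e hE).M ≃ₗ[K] (X.M →ₗ[K] E) where
  toFun φ := φ
  invFun φ := φ
  map_add' _ _ := rfl
  map_smul' c (φ : X.M →ₗ[K] E) := LinearMap.ext fun x =>
    (congrArg φ (unop_algebraMap_smul e c x)).trans (map_smul φ c x)

theorem dualEquiv_smul_apply (s : S) (φ : (X.dual e hE).M) (x : X.M) :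
    X.dualEquiv e hE (s • φ) x = X.dualEquiv e hE φ ((e s).unop • x) :=
  rfl

/-- The map into the dual of `X` given by a balanced pairing. -/
def dualLift {Z : ModA S} (b : Z.M →ₗ[K] X.M →ₗ[K] E)
    (hb : ∀ s z x, b (s • z) x = b z ((e s).unop • x)) : Z.M →ₗ[S] (X.dual e hE).M where
  toFun z := (X.dualEquiv e hE).symm (b z)
  map_add' z w := by simp
  map_smul' s z := (X.dualEquiv e hE).injective <| LinearMap.ext fun x => by
    simp [hb, dualEquiv_smul_apply]

/-- The action of the duality on homomorphisms. -/
def dualMap (e : S ≃ₐ[K] Rᵐᵒᵖ) (hE : IsDualizingModule K E) (f : X.M →ₗ[R] Y.M) :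
    (Y.dual e hE).M →ₗ[S] (X.dual e hE).M :=
  dualLift (((f.restrictScalars K).lcomp K E).comp (Y.dualEquiv e hE).toLinearMap)
    fun s φ x => by simp [dualEquiv_smul_apply]

theorem dualEquiv_dualMap_apply (f : X.M →ₗ[R] Y.M) (φ : (Y.dual e hE).M) (x : X.M) :
    X.dualEquiv e hE (dualMap e hE f φ) x = Y.dualEquiv e hE φ (f x) :=
  rfl

@[simp]
theorem dualMap_id : dualMap e hE (.id : X.M →ₗ[R] X.M) = .id := rfl

theorem dualMap_zero : dualMap e hE (0 : X.M →ₗ[R] Y.M) = 0 :=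
  LinearMap.ext fun φ => (X.dualEquiv e hE).injective <| LinearMap.ext fun _ =>
    map_zero (Y.dualEquiv e hE φ)

theorem dualMap_comp (f : X.M →ₗ[R] Y.M) (g : Y.M →ₗ[R] Z.M) :
    dualMap e hE (g.comp f) = (dualMap e hE f).comp (dualMap e hE g) := rfl

theorem dualMap_surjective (e : S ≃ₐ[K] Rᵐᵒᵖ) (hE : IsDualizingModule K E) {f : X.M →ₗ[R] Y.M}
    (hf : Function.Injective f) : Function.Surjective (dualMap e hE f) := fun φ => by
  obtain ⟨χ, hχ⟩ := hE.exists_comp_eq (f := f.restrictScalars K) hf (X.dualEquiv e hE φ)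
  exact ⟨(Y.dualEquiv e hE).symm χ, (X.dualEquiv e hE).injective hχ⟩

end ModA

theorem ModA.Iso.dual (e : S ≃ₐ[K] Rᵐᵒᵖ) (hE : IsDualizingModule K E) (h : X.Iso Y) :
    (X.dual e hE).Iso (Y.dual e hE) :=
  h.elim fun i => ⟨.ofLinearMap (dualMap e hE i.symm.toLinearMap) (dualMap e hE i.toLinearMap)
    (by rw [← ModA.dualMap_comp]; simp) (by rw [← ModA.dualMap_comp]; simp)⟩

variable [Module.Finite K S]

namespace ModA

/-- The canonical map from `X` to its double dual. -/
def toDualDual (e : S ≃ₐ[K] Rᵐᵒᵖ) (hE : IsDualizingModule K E) (X : ModA R) :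
    X.M →ₗ[R] ((X.dual e hE).dual (AlgEquiv.opComm e).symm hE).M :=
  dualLift (X.dualEquiv e hE).toLinearMap.flip fun r x φ => by
    simp [dualEquiv_smul_apply, AlgEquiv.opComm]

theorem dualEquiv_toDualDual_apply (x : X.M) (φ : (X.dual e hE).M) :
    (X.dual e hE).dualEquiv _ hE (X.toDualDual e hE x) φ = X.dualEquiv e hE φ x :=
  rfl

theorem bijective_toDualDual : Function.Bijective (X.toDualDual e hE) :=
  ((X.dual e hE).dualEquiv (AlgEquiv.opComm e).symm hE).symm.bijective.comp <|
    ((X.dualEquiv e hE).symm.arrowCongr (.refl K E)).bijective.comp <|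
      hE.bijective_applyₗ X.isFiniteLength_base

theorem exists_dualMap_eq (k : (Y.dual e hE).M →ₗ[S] (X.dual e hE).M) :
    ∃ f : X.M →ₗ[R] Y.M, dualMap e hE f = k := by
  obtain ⟨f, hf⟩ := exists_comp_eq_of_range_le (f := Y.toDualDual e hE)
    (g := (dualMap (AlgEquiv.opComm e).symm hE k).comp (X.toDualDual e hE))
    bijective_toDualDual.1 (by simp [LinearMap.range_eq_top.2 bijective_toDualDual.2])
  refine ⟨f, LinearMap.ext fun φ => (X.dualEquiv e hE).injective <| LinearMap.ext fun x => ?_⟩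
  rw [dualEquiv_dualMap_apply, ← dualEquiv_toDualDual_apply, ← LinearMap.comp_apply, hf]
  rfl

theorem dualMap_injective :
    Function.Injective (dualMap e hE : (X.M →ₗ[R] Y.M) → _) := fun f g hfg =>
  LinearMap.ext fun x => bijective_toDualDual.1 <|
    ((Y.dual e hE).dualEquiv _ hE).injective <| LinearMap.ext fun φ => by
      simp only [dualEquiv_toDualDual_apply, ← dualEquiv_dualMap_apply, hfg]

theorem exists_dual_iso (e : S ≃ₐ[K] Rᵐᵒᵖ) (hE : IsDualizingModule K E) (Z : ModA S) :
    ∃ W : ModA R, (W.dual e hE).Iso Z :=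
  ⟨Z.dual (AlgEquiv.opComm e).symm hE,
    ⟨(LinearEquiv.ofBijective (Z.toDualDual (AlgEquiv.opComm e).symm hE)
      bijective_toDualDual).symm⟩⟩

theorem IsIndec.dual (hX : X.IsIndec) : (X.dual e hE).IsIndec := by
  have := hX.1
  obtain ⟨x, hx⟩ := exists_ne (0 : X.M)
  obtain ⟨φ, hφ⟩ := hE.exists_apply_ne_zero hx
  refine ⟨⟨(X.dualEquiv e hE).symm φ, 0, fun h => hφ ?_⟩, fun F hF => ?_⟩
  · rw [← (X.dualEquiv e hE).apply_symm_apply φ, h, map_zero, LinearMap.zero_apply]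
  obtain ⟨f, rfl⟩ := exists_dualMap_eq F
  have hf : f = 0 ∨ f = .id := hX.2 f (dualMap_injective hF)
  exact hf.imp (fun h => by rw [h, dualMap_zero]) (fun h => by rw [h, dualMap_id]; rfl)

theorem splitMonoMap_dualMap_iff {f : X.M →ₗ[R] Y.M} :
    SplitMonoMap (dualMap e hE f) ↔ SplitEpiMap f := by
  refine ⟨fun ⟨r, hr⟩ => ?_, fun ⟨s, hs⟩ => ⟨dualMap e hE s, ?_⟩⟩
  · obtain ⟨s, rfl⟩ := exists_dualMap_eq r
    exact ⟨s, dualMap_injective hr⟩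
  · rw [← dualMap_comp, hs, dualMap_id]

theorem splitEpiMap_dualMap_iff {f : X.M →ₗ[R] Y.M} :
    SplitEpiMap (dualMap e hE f) ↔ SplitMonoMap f := by
  refine ⟨fun ⟨r, hr⟩ => ?_, fun ⟨s, hs⟩ => ⟨dualMap e hE s, ?_⟩⟩
  · obtain ⟨s, rfl⟩ := exists_dualMap_eq r
    exact ⟨s, dualMap_injective hr⟩
  · rw [← dualMap_comp, hs, dualMap_id]

end ModA

theorem IsIrred.dualMap (e : S ≃ₐ[K] Rᵐᵒᵖ) (hE : IsDualizingModule K E) {f : X.M →ₗ[R] Y.M}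
    (hf : IsIrred f) : IsIrred (ModA.dualMap e hE f) := by
  refine ⟨mt ModA.splitMonoMap_dualMap_iff.1 hf.2.1, mt ModA.splitEpiMap_dualMap_iff.1 hf.1,
    fun Z g h hgh => ?_⟩
  obtain ⟨W, ⟨i⟩⟩ := ModA.exists_dual_iso e hE Z
  obtain ⟨h', hh'⟩ := ModA.exists_dualMap_eq (h.comp i.toLinearMap)
  obtain ⟨g', hg'⟩ := ModA.exists_dualMap_eq (i.symm.toLinearMap.comp g)
  have hfac : g'.comp h' = f := ModA.dualMap_injective (e := e) (hE := hE) <| by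
    rw [ModA.dualMap_comp, hg', hh', ← hgh]
    ext; simp
  refine (hf.2.2 W h' g' hfac).symm.imp (fun hs => ?_) (fun hs => ?_)
  · rw [← ModA.splitMonoMap_dualMap_iff (e := e) (hE := hE), hg'] at hs
    exact hs.of_comp
  · rw [← ModA.splitEpiMap_dualMap_iff (e := e) (hE := hE), hh'] at hs
    exact hs.of_comp

/-- The dual of an indecomposable module. -/
def IndecModA.dual (e : S ≃ₐ[K] Rᵐᵒᵖ) (hE : IsDualizingModule K E) (X : IndecModA R) :
    IndecModA S :=
  ⟨X.1.dual e hE, X.2.dual⟩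

namespace ARVertex

/-- The duality as a bijection between the vertices of `Γ_R` and those of `Γ_S`. -/
def dual (e : S ≃ₐ[K] Rᵐᵒᵖ) (hE : IsDualizingModule K E) : ARVertex R → ARVertex S :=
  Quotient.map (IndecModA.dual e hE) fun _ _ => ModA.Iso.dual e hE

theorem dual_dual (e : S ≃ₐ[K] Rᵐᵒᵖ) (hE : IsDualizingModule K E) (x : ARVertex R) :
    (x.dual e hE).dual (AlgEquiv.opComm e).symm hE = x := by
  induction x using Quotient.ind with | _ X
  exact Quotient.sound (s := isoSetoid R)
    ⟨(LinearEquiv.ofBijective (X.1.toDualDual e hE) ModA.bijective_toDualDual).symm⟩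

end ARVertex

theorem ARArrow.dual (e : S ≃ₐ[K] Rᵐᵒᵖ) (hE : IsDualizingModule K E) {x y : ARVertex R}
    (h : ARArrow x y) : ARArrow (y.dual e hE) (x.dual e hE) := by
  obtain ⟨X, Y, f, hf, rfl, rfl⟩ := h
  exact (hf.dualMap e hE).arArrow (X := Y.dual e hE) (Y := X.dual e hE)

theorem OnARCycle.dual (e : S ≃ₐ[K] Rᵐᵒᵖ) (hE : IsDualizingModule K E) {x : ARVertex R}
    (h : OnARCycle x) : OnARCycle (x.dual e hE) :=
  Relation.TransGen.swap _ _ <| Relation.TransGen.lift (p := Function.swap ARArrow)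
    (ARVertex.dual e hE) (fun _ _ => ARArrow.dual e hE) _ _ h

theorem ARReaches.dual (e : S ≃ₐ[K] Rᵐᵒᵖ) (hE : IsDualizingModule K E) {x y : ARVertex R}
    (h : ARReaches x y) : ARReaches (y.dual e hE) (x.dual e hE) :=
  Relation.ReflTransGen.swap _ _ <| Relation.ReflTransGen.lift (p := Function.swap ARArrow)
    (ARVertex.dual e hE) (fun _ _ => ARArrow.dual e hE) _ _ h

theorem arReaches_of_isIrred_of_injective {X Y : IndecModA R} {g : X.1.M →ₗ[R] Y.1.M}
    (e : S ≃ₐ[K] Rᵐᵒᵖ) (hE : IsDualizingModule K E)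
    (hS : ∀ Z : IndecModA S, Module.Projective S Z.1.M ∨ EndsAlmostSplitSeq Z)
    (hg : IsIrred g) (hinj : Function.Injective g) (hX : OnARCycle (.mk X)) :
    ARReaches (.mk Y) (.mk X) := by
  have h : ARReaches ((ARVertex.mk X).dual e hE) ((ARVertex.mk Y).dual e hE) :=
    arReaches_of_isIrred_of_surjective (X := Y.dual e hE) (Y := X.dual e hE) hS
      (hg.dualMap e hE) (ModA.dualMap_surjective e hE hinj) (hX.dual e hE)
  simpa only [ARVertex.dual_dual] using h.dual (AlgEquiv.opComm e).symm hE

end Duality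

section ExistenceAlmostSplit

variable {K : Type u} [CommRing K] [Algebra K R] {E : Type u} [AddCommGroup E] [Module K E]
  {P Q : Type u} [AddCommGroup P] [Module R P] [AddCommGroup Q] [Module R Q]

/-- The ring `S` as a module over itself. -/
def ModA.regular (S : Type u) [Ring S] [IsArtinianRing S] : ModA S := .of S S

/-- The elements of `ModA.regular S` as elements of `S`. -/
def ModA.regularEquiv (S : Type u) [Ring S] [IsArtinianRing S] : (ModA.regular S).M ≃ₗ[S] S :=
  .refl S S

/-- The form `t` exhibits `J` as the module `Hom_K(R, E)` coinduced from `E`, with `t` the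
evaluation at `1`. -/
def IsCoinduced {J : ModA R} (t : J.M →ₗ[K] E) : Prop :=
  ∀ (Z : ModA R) (μ : Z.M →ₗ[K] E), ∃! ψ : Z.M →ₗ[R] J.M, ∀ z, t (ψ z) = μ z

/-- The form `t` identifies `Hom_R(-, N)` with the functor `Hom_K(Hom_R(P, -), E)`. For a finitely
generated projective module `P` such an `N` exists and is the Nakayama functor applied to `P`. -/
def RepresentsDualHom {N : ModA R} (t : (P →ₗ[R] N.M) →ₗ[K] E) : Prop :=
  ∀ (Z : ModA R) (μ : (P →ₗ[R] Z.M) →ₗ[K] E), ∃! ψ : Z.M →ₗ[R] N.M, ∀ α, t (ψ.comp α) = μ α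

theorem IsDualizingModule.exists_isCoinduced [IsArtinianRing K] [Module.Finite K R]
    (hE : IsDualizingModule K E) : ∃ (J : ModA R) (t : J.M →ₗ[K] E), IsCoinduced t := by
  have : Module.Finite K Rᵐᵒᵖ := .equiv (MulOpposite.opLinearEquiv K)
  have : IsArtinianRing Rᵐᵒᵖ := isArtinian_of_tower K inferInstance
  let U : ModA Rᵐᵒᵖ := .regular Rᵐᵒᵖ
  let c : U.M ≃ₗ[Rᵐᵒᵖ] Rᵐᵒᵖ := ModA.regularEquiv Rᵐᵒᵖ
  let δ := U.dualEquiv (AlgEquiv.opOp K R) hE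
  let b (Z : ModA R) (μ : Z.M →ₗ[K] E) : Z.M →ₗ[K] U.M →ₗ[K] E :=
    LinearMap.mk₂ K (fun z r => μ ((c r).unop • z)) (by simp)
      (fun a z r => by rw [smul_comm, map_smul]) (by simp [add_smul])
      (fun a z r => by
        rw [← algebraMap_smul Rᵐᵒᵖ a r]
        simp [mul_smul, MulOpposite.algebraMap_apply, smul_comm _ a])
  have hb (Z : ModA R) (μ : Z.M →ₗ[K] E) (r : R) (z : Z.M) (x : U.M) :
      b Z μ (r • z) x = b Z μ z ((AlgEquiv.opOp K R r).unop • x) := by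
    simp [b, mul_smul]
  refine ⟨U.dual (AlgEquiv.opOp K R) hE, (LinearMap.applyₗ (c.symm 1)).comp δ.toLinearMap,
    fun Z μ => ⟨ModA.dualLift (b Z μ) (hb Z μ), fun z => ?_, fun ψ hψ => LinearMap.ext fun z =>
      δ.injective <| LinearMap.ext fun x => ?_⟩⟩
  · change μ ((c (c.symm 1)).unop • z) = μ z
    simp
  · have hx : c x • c.symm 1 = x := by rw [← map_smul, smul_eq_mul, mul_one, c.symm_apply_apply]
    calc δ (ψ z) x = δ (ψ z) (c x • c.symm 1) := by rw [hx]
      _ = δ (ψ ((c x).unop • z)) (c.symm 1) := by rw [ψ.map_smul]; rfl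
      _ = μ ((c x).unop • z) := hψ _

theorem IsCoinduced.exists_representsDualHom {J : ModA R} {t : J.M →ₗ[K] E} (ht : IsCoinduced t)
    (n : ℕ) : ∃ (N : ModA R) (s : ((Fin n → R) →ₗ[R] N.M) →ₗ[K] E), RepresentsDualHom s := by
  let N : ModA R := .of R (Fin n → J.M)
  let s : ((Fin n → R) →ₗ[R] N.M) →ₗ[K] E := ∑ j, t.comp
    (((LinearMap.proj j : N.M →ₗ[R] J.M).restrictScalars K).comp
      (LinearMap.applyₗ' K (Pi.single j (1 : R))))
  have hs (α : (Fin n → R) →ₗ[R] N.M) : s α = ∑ j, t (α (Pi.single j 1) j) := by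
    simp [s]
  let ι (Z : ModA R) (j : Fin n) : Z.M →ₗ[K] (Fin n → R) →ₗ[R] Z.M :=
    ((LinearMap.proj j : (Fin n → R) →ₗ[R] R).lcomp K Z.M).comp
      (LinearMap.ringLmapEquivSelf R K Z.M).symm.toLinearMap
  have hι (Z : ModA R) (j : Fin n) (z : Z.M) (x : Fin n → R) : ι Z j z x = x j • z := rfl
  have hsum (Z : ModA R) (α : (Fin n → R) →ₗ[R] Z.M) : ∑ j, ι Z j (α (Pi.single j 1)) = α :=
    LinearMap.pi_ext' fun i => LinearMap.ext_ring <| by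
      simp [hι, Pi.single_apply]
  refine ⟨N, s, fun Z μ => ?_⟩
  choose ψ hψ huniq using fun j => ht Z (μ.comp (ι Z j))
  refine ⟨LinearMap.pi ψ, fun α => ?_, fun χ hχ => LinearMap.ext fun z => funext fun j => ?_⟩
  · calc s ((LinearMap.pi ψ).comp α) = ∑ j, t (ψ j (α (Pi.single j 1))) := hs _
      _ = ∑ j, μ (ι Z j (α (Pi.single j 1))) := Finset.sum_congr rfl fun j _ => hψ j _
      _ = μ α := by rw [← map_sum, hsum]
  · refine LinearMap.congr_fun (huniq j ((LinearMap.proj j).comp χ) fun z => ?_) z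
    have hne (i : Fin n) (hij : i ≠ j) : t (χ (ι Z j z (Pi.single i 1)) i) = 0 := by
      rw [hι, Pi.single_eq_of_ne hij.symm, zero_smul, map_zero]
      exact map_zero t
    calc t (χ z j) = t (χ (ι Z j z (Pi.single j 1)) j) := by rw [hι, Pi.single_eq_same, one_smul]
      _ = s (χ.comp (ι Z j z)) :=
        ((hs (χ.comp (ι Z j z))).trans (Fintype.sum_eq_single j hne)).symm
      _ = μ (ι Z j z) := hχ _

namespace RepresentsDualHom

variable {N N' : ModA R} {t : (P →ₗ[R] N.M) →ₗ[K] E} {t' : (Q →ₗ[R] N'.M) →ₗ[K] E}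

theorem ext (ht : RepresentsDualHom t) {ψ χ : Z.M →ₗ[R] N.M}
    (h : ∀ α : P →ₗ[R] Z.M, t (ψ.comp α) = t (χ.comp α)) : ψ = χ :=
  (ht Z (t.comp (LinearMap.compRight K χ))).unique h fun _ => rfl

theorem exists_map (t : (P →ₗ[R] N.M) →ₗ[K] E) (ht' : RepresentsDualHom t') (A : P →ₗ[R] Q) :
    ∃ ν : N.M →ₗ[R] N'.M, ∀ α : Q →ₗ[R] N.M, t' (ν.comp α) = t (α.comp A) :=
  (ht' N (t.comp (A.lcomp K N.M))).exists

end RepresentsDualHom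

theorem exists_pullback (f : X.M →ₗ[R] Z.M) (g : Y.M →ₗ[R] Z.M) :
    ∃ (F : ModA R) (e : F.M →ₗ[R] X.M), ∀ (W : ModA R) (h : W.M →ₗ[R] X.M),
      (∃ h' : W.M →ₗ[R] F.M, e.comp h' = h) ↔ ∃ k : W.M →ₗ[R] Y.M, g.comp k = f.comp h := by
  let D : (X.M × Y.M) →ₗ[R] Z.M := f.comp (.fst R _ _) - g.comp (.snd R _ _)
  refine ⟨.of R D.ker, (LinearMap.fst R _ _).comp D.ker.subtype, fun W h => ⟨?_, ?_⟩⟩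
  · rintro ⟨h', rfl⟩
    refine ⟨(LinearMap.snd R _ _).comp (D.ker.subtype.comp h'), LinearMap.ext fun w => ?_⟩
    exact (sub_eq_zero.1 (h' w).2).symm
  · rintro ⟨k, hk⟩
    exact ⟨(h.prod k).codRestrict D.ker fun w => sub_eq_zero.2 (LinearMap.congr_fun hk w).symm,
      rfl⟩

theorem IsDualizingModule.exists_factor_iff (hE : IsDualizingModule K E)
    {N N' : ModA R} {t : (P →ₗ[R] N.M) →ₗ[K] E} {t' : (Q →ₗ[R] N'.M) →ₗ[K] E}
    (ht : RepresentsDualHom t) (ht' : RepresentsDualHom t')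
    {A : Q →ₗ[R] P} {p : P →ₗ[R] Y.M} (hp : Function.Surjective p) (hA : A.range = p.ker)
    (ξ : (Y.M →ₗ[R] Y.M) →ₗ[K] E) :
    ∃ (F : ModA R) (e : F.M →ₗ[R] Y.M), ∀ (Z : ModA R) (h : Z.M →ₗ[R] Y.M),
      (∃ h' : Z.M →ₗ[R] F.M, e.comp h' = h) ↔ ∀ u : Y.M →ₗ[R] Z.M, ξ (h.comp u) = 0 := by
  obtain ⟨Φ, hΦ⟩ := hE.exists_comp_eq (f := p.lcomp K Y.M)
    (fun u v huv => (LinearMap.cancel_right hp).1 huv) ξ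
  replace hΦ (u : Y.M →ₗ[R] Y.M) : Φ (u.comp p) = ξ u := LinearMap.congr_fun hΦ u
  obtain ⟨q, hq, -⟩ := ht Y Φ
  obtain ⟨ν, hν⟩ := ht.exists_map t' A
  obtain ⟨F, e, he⟩ := exists_pullback q ν
  refine ⟨F, e, fun Z h => (he Z h).trans ⟨?_, fun hξ => ?_⟩⟩
  · rintro ⟨k, hk⟩ u
    have hpA : p.comp A = 0 := LinearMap.range_le_ker_iff.1 hA.le
    calc ξ (h.comp u) = t (q.comp (h.comp (u.comp p))) := by rw [hq, ← hΦ]; rfl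
      _ = t (ν.comp (k.comp (u.comp p))) := by rw [← LinearMap.comp_assoc, ← hk]; rfl
      _ = t' ((k.comp u).comp (p.comp A)) := hν _
      _ = 0 := by rw [hpA, LinearMap.comp_zero, map_zero]
  · have hker : (A.lcomp K Z.M).ker ≤ (Φ.comp (LinearMap.compRight K h)).ker := fun α hα => by
      obtain ⟨u, rfl⟩ := _root_.exists_comp_eq_of_ker_le (g := α) hp
        (hA.symm.le.trans (LinearMap.range_le_ker_iff.2 hα))
      exact (hΦ (h.comp u)).trans (hξ u)
    obtain ⟨μ, hμ⟩ := hE.exists_comp_eq_of_ker_le hker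
    obtain ⟨k, hk, -⟩ := ht' Z μ
    refine ⟨k, ht.ext fun α => ?_⟩
    calc t (ν.comp (k.comp α)) = μ (α.comp A) := (hν _).trans (hk (α.comp A))
      _ = t (q.comp (h.comp α)) := (LinearMap.congr_fun hμ α).trans (hq _).symm

/-- The endomorphisms of the indecomposable module `Y` that are not automorphisms, as a
`K`-submodule of the endomorphism ring of `Y`: its radical. -/
def ModA.IsIndec.nonAutomorphisms (K : Type u) [CommRing K] [Algebra K R] (hY : Y.IsIndec) :
    Submodule K (Y.M →ₗ[R] Y.M) where
  carrier := {f | ¬Function.Bijective f}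
  zero_mem' := fun h =>
    have := hY.1
    not_subsingleton Y.M ⟨fun _ _ => h.1 rfl⟩
  add_mem' := fun hf hg hfg => (hY.bijective_or_bijective_of_add hfg).elim hf hg
  smul_mem' := fun c f hf hcf => hf <|
    IsArtinian.bijective_of_injective_endomorphism f fun _ _ hxy =>
      hcf.1 (congrArg (c • ·) hxy)

theorem IsDualizingModule.exists_isRightAlmostSplit [IsArtinianRing K] [Module.Finite K R]
    (hE : IsDualizingModule K E) (hY : Y.IsIndec) :
    ∃ (F : ModA R) (e : F.M →ₗ[R] Y.M), IsRightAlmostSplit e := by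
  have : IsArtinianRing R := isArtinian_of_tower K inferInstance
  obtain ⟨J, s, hs⟩ := hE.exists_isCoinduced (R := R)
  obtain ⟨n, p, hp⟩ := Module.Finite.exists_fin' R Y.M
  obtain ⟨m, A, hA⟩ := Module.Finite.exists_fin' R p.ker
  obtain ⟨N, t, ht⟩ := hs.exists_representsDualHom n
  obtain ⟨N', t', ht'⟩ := hs.exists_representsDualHom m
  have hid : LinearMap.id ∉ hY.nonAutomorphisms K := fun h => h Function.bijective_id
  obtain ⟨ξ, hξ_ker, hξ⟩ := hE.exists_le_ker_apply_ne_zero hid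
  obtain ⟨F, e, he⟩ := hE.exists_factor_iff ht ht' (A := p.ker.subtype.comp A) hp
    (by rw [LinearMap.range_comp, LinearMap.range_eq_top.2 hA, Submodule.map_top,
      Submodule.range_subtype]) ξ
  refine ⟨F, e, fun hsplit => hξ ?_, fun Z h hh => (he Z h).2 fun u => hξ_ker fun hb => hh ?_⟩
  · simpa using (he Y .id).1 hsplit .id
  · exact splitEpiMap_of_bijective_comp hb

theorem projective_or_endsAlmostSplitSeq (K : Type u) [CommRing K] [IsArtinianRing K] [Algebra K R]
    [Module.Finite K R] (Z : IndecModA R) : Module.Projective R Z.1.M ∨ EndsAlmostSplitSeq Z := by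
  have : IsArtinianRing R := isArtinian_of_tower K inferInstance
  obtain ⟨E, _, _, hE⟩ := exists_isDualizingModule K
  obtain ⟨F, e, he⟩ := hE.exists_isRightAlmostSplit Z.2
  exact or_iff_not_imp_left.2 fun hproj => exists_almostSplitSeq_of_isRightAlmostSplit Z.2 hproj he

end ExistenceAlmostSplit

section CyclicComponents

open Relation

/-- The edges of the full subquiver of `Γ_R` on `S`, with their orientation forgotten. -/
abbrev ARStepIn (S : Set (ARVertex R)) (x y : ARVertex R) : Prop := x ∈ S ∧ y ∈ S ∧ ARStep x y

variable {x y : ARVertex R}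

theorem reflTransGen_arStepIn_symm {S : Set (ARVertex R)} (h : ReflTransGen (ARStepIn S) x y) :
    ReflTransGen (ARStepIn S) y x :=
  have : Std.Symm (ARStepIn S) := ⟨fun _ _ h => ⟨h.2.1, h.1, h.2.2.symm⟩⟩
  Std.Symm.symm _ _ h

theorem exists_isComponentOf_iff {S : Set (ARVertex R)} :
    (∃ D, IsComponentOf S D ∧ x ∈ D ∧ y ∈ D) ↔ x ∈ S ∧ ReflTransGen (ARStepIn S) x y := by
  constructor
  · rintro ⟨D, ⟨hDS, -, -, hD⟩, hx, hy⟩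
    exact ⟨hDS hx, hD x hx y hy⟩
  · rintro ⟨hx, hxy⟩
    have hS {z : ARVertex R} (hz : ReflTransGen (ARStepIn S) x z) : z ∈ S := by
      cases hz with
      | refl => exact hx
      | tail _ h => exact h.2.1
    exact ⟨{z | ReflTransGen (ARStepIn S) x z},
      ⟨fun _ => hS, ⟨x, .refl⟩, fun a ha b hb hab => ha.tail ⟨hS ha, hb, hab⟩,
        fun a ha b hb => (reflTransGen_arStepIn_symm ha).trans hb⟩, .refl, hxy⟩

theorem ARReaches.reflTransGen_arStepIn (hxy : ARReaches x y) (hyx : TransGen ARArrow y x) :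
    ReflTransGen (ARStepIn {z | OnARCycle z}) x y := by
  induction hxy using ReflTransGen.head_induction_on with
  | refl => exact .refl
  | head hac hcy ih =>
    exact .head ⟨.trans_right (.head hac hcy) hyx, .trans_right hcy (hyx.tail hac), .inl hac⟩
      (ih (hyx.tail hac))

theorem ARArrow.arReaches_of_onARCycle (K : Type u) [CommRing K] [IsArtinianRing K]
    [Algebra K R] [Module.Finite K R] (h : ARArrow x y) (hx : OnARCycle x) (hy : OnARCycle y) :
    ARReaches y x := by
  have : Module.Finite K Rᵐᵒᵖ := .equiv (MulOpposite.opLinearEquiv K)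
  obtain ⟨X, Y, g, hg, rfl, rfl⟩ := h
  rcases hg.injective_or_surjective with hinj | hsurj
  · obtain ⟨E, _, _, hE⟩ := exists_isDualizingModule K
    exact arReaches_of_isIrred_of_injective (S := Rᵐᵒᵖ) (K := K) .refl hE
      (projective_or_endsAlmostSplitSeq K) hg hinj hx
  · exact arReaches_of_isIrred_of_surjective (projective_or_endsAlmostSplitSeq K) hg hsurj hy

theorem arReaches_of_reflTransGen_arStepIn (K : Type u) [CommRing K] [IsArtinianRing K]
    [Algebra K R] [Module.Finite K R] (h : ReflTransGen (ARStepIn {z | OnARCycle z}) x y) :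
    ARReaches x y := by
  induction h with
  | refl => exact .refl
  | tail _ h ih =>
    obtain ⟨hb, hc, hbc | hcb⟩ := h
    · exact ih.tail hbc
    · exact ih.trans (hcb.arReaches_of_onARCycle K hc hb)

theorem same_cyclic_component_iff_common_cycle_general (K : Type u) [CommRing K] [IsArtinianRing K]
    [Algebra K R] [Module.Finite K R] (x y : ARVertex R) :
    (∃ Γ : Set (ARVertex R), IsCyclicComponent Γ ∧ x ∈ Γ ∧ y ∈ Γ) ↔
      (ReflTransGen ARArrow x y ∧ TransGen ARArrow y x) := by
  refine exists_isComponentOf_iff.trans ⟨fun ⟨hx, hxy⟩ => ?_, fun ⟨hxy, hyx⟩ => ?_⟩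
  · have hyx := arReaches_of_reflTransGen_arStepIn K (reflTransGen_arStepIn_symm hxy)
    exact ⟨arReaches_of_reflTransGen_arStepIn K hxy, .trans_right hyx hx⟩
  · exact ⟨.trans_right hxy hyx, ARReaches.reflTransGen_arStepIn hxy hyx⟩

end CyclicComponents

/-- **Proposition (cyclic components).** Let `A` be a basic indecomposable artin algebra
and `X`, `Y` modules in `ind A`. Then `X` and `Y` belong to the same connected component
of the cyclic quiver `_cΓ_A` iff there is an oriented cycle in `Γ_A` passing through both
`X` and `Y` (equivalently, oriented paths from `X` to `Y` and back). -/
theorem same_cyclic_component_iff_common_cycle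
    (K A : Type u) [CommRing K] [IsArtinianRing K] [Ring A] [Algebra K A]
    [Module.Finite K A] (hbasic : IsBasicAlgebra A) (hconn : IsConnectedAlgebra A)
    (X Y : IndecModA Aᵐᵒᵖ) :
    (∃ Γ : Set (ARVertex Aᵐᵒᵖ), IsCyclicComponent Γ ∧
        ARVertex.mk X ∈ Γ ∧ ARVertex.mk Y ∈ Γ) ↔
      (Relation.ReflTransGen ARArrow (ARVertex.mk X) (ARVertex.mk Y) ∧
        Relation.TransGen ARArrow (ARVertex.mk Y) (ARVertex.mk X)) := by
  have : Module.Finite K Aᵐᵒᵖ := .equiv (MulOpposite.opLinearEquiv K)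
  exact same_cyclic_component_iff_common_cycle_general K _ _
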